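/- arXiv:1402.6370 — 4 statements merged into one kernel-verified Lean document; each statement's English description precedes it below -/
import Mathlib

section
/- Let n ≥ 1 and let u : ℝⁿ → ℝ be convex, twice continuously differentiable, and Lipschitz continuous. Fix x ∈ ℝⁿ. Then, as s → 1 from the left (with 1/2 < s < 1), (1−s)·D_s u(x) converges to (ω_n/4)·(det D²u(x))^{1/n}, where D²u(x) is the Hessian matrix of u at x and (det D²u(x))^{1/n} is the nonnegative real n-th root of its determinant. -/
open MeasureTheory

noncomputable def surfOmega (k : ℕ) : ℝ := 2 * Real.pi ^ ((k : ℝ) / 2) / Real.Gamma ((k : ℝ) / 2)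

noncomputable def mu1 (s L C : ℝ) : ℝ := L ^ (2 - 2 * s) * (C / 2) ^ (2 * s - 1) / (2 * s - 1)

noncomputable def C1 (n : ℕ) (s L C : ℝ) : ℝ :=
  (Real.sqrt Real.pi * Real.Gamma (((n : ℝ) - 1) / 2 + s) / Real.Gamma ((n : ℝ) / 2 + s)) *
    (mu1 s L C * surfOmega (n - 1) / 2)

noncomputable def C2 (n : ℕ) (s : ℝ) : ℝ :=
  surfOmega (n - 1) * Real.Gamma (((n : ℝ) - 1) / 2) * Real.Gamma (s + 1 / 2) /
    (2 * Real.Gamma ((n : ℝ) / 2 + s))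

noncomputable def mu0 (n : ℕ) (s L C η₀ : ℝ) : ℝ :=
  C1 n s L C ^ (1 - (n : ℝ)) * (C2 n s)⁻¹ * (η₀ / 2) ^ (n : ℝ)

/-- Second-order increment `δ(u,x,y) = u(x+y) + u(x-y) - 2u(x)`. -/
noncomputable def delta2 {n : ℕ} (u : EuclideanSpace ℝ (Fin n) → ℝ)
    (x y : EuclideanSpace ℝ (Fin n)) : ℝ :=
  u (x + y) + u (x - y) - 2 * u x

/-- Integrand `δ(u,x,y)/|A⁻¹ y|^(n+2s)`. -/
noncomputable def kernelA {n : ℕ} (s : ℝ) (A : Matrix (Fin n) (Fin n) ℝ)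
    (u : EuclideanSpace ℝ (Fin n) → ℝ) (x y : EuclideanSpace ℝ (Fin n)) : ℝ :=
  delta2 u x y /
    ‖(EuclideanSpace.equiv (Fin n) ℝ).symm (A⁻¹.mulVec (EuclideanSpace.equiv (Fin n) ℝ y))‖ ^
      ((n : ℝ) + 2 * s)

/-- The linear operator `L_A u(x) = (1/2) ∫ δ(u,x,y)/|A⁻¹ y|^(n+2s) dy`. -/
noncomputable def LA {n : ℕ} (s : ℝ) (A : Matrix (Fin n) (Fin n) ℝ)
    (u : EuclideanSpace ℝ (Fin n) → ℝ) (x : EuclideanSpace ℝ (Fin n)) : ℝ :=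
  (1 / 2) * ∫ y, kernelA s A u x y


open Matrix Filter

/-- Hessian matrix of `u` at `x`, with entries the second partial derivatives. -/
noncomputable def hess {n : ℕ} (u : EuclideanSpace ℝ (Fin n) → ℝ)
    (x : EuclideanSpace ℝ (Fin n)) : Matrix (Fin n) (Fin n) ℝ :=
  Matrix.of fun i j =>
    fderiv ℝ (fun z => fderiv ℝ u z (EuclideanSpace.single j (1 : ℝ))) x
      (EuclideanSpace.single i (1 : ℝ))

lemma aux_omega (n : ℕ) (hn : 1 ≤ n) :
    (n : ℝ) * (volume : Measure (EuclideanSpace ℝ (Fin n))).real (Metric.ball 0 1) = surfOmega n := by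
  have : Nonempty (Fin n) := ⟨⟨0, hn⟩⟩
  have hn0 : (0:ℝ) < n := by exact_mod_cast hn
  have hG : 0 < Real.Gamma ((n:ℝ)/2) := Real.Gamma_pos_of_pos (by positivity)
  have h1 : Real.Gamma ((n:ℝ)/2 + 1) = (n:ℝ)/2 * Real.Gamma ((n:ℝ)/2) :=
    Real.Gamma_add_one (by positivity)
  have h2 : Real.sqrt Real.pi ^ n = Real.pi ^ ((n:ℝ)/2) := by
    rw [Real.sqrt_eq_rpow, ← Real.rpow_natCast, ← Real.rpow_mul Real.pi_pos.le]; ring_nf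
  rw [Measure.real, EuclideanSpace.volume_ball]
  simp only [Fintype.card_fin, ENNReal.ofReal_one, one_pow, one_mul]
  rw [ENNReal.toReal_ofReal (by rw [h1]; positivity), h1, h2, surfOmega]
  field_simp

lemma aux_omega_pos (n : ℕ) (hn : 1 ≤ n) : 0 < surfOmega n := by
  have hn0 : (0:ℝ) < n := by exact_mod_cast hn
  have hG : 0 < Real.Gamma ((n:ℝ)/2) := Real.Gamma_pos_of_pos (by positivity)
  unfold surfOmega; positivity

/-- model radial profile -/
noncomputable def hprof (a b r t : ℝ) : ℝ := if t ≤ r then a * t ^ 2 else b * t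

lemma aux_radial1 {s : ℝ} (hs : 1/2 < s) (hs1 : s < 1) (n : ℕ) (hn : 1 ≤ n) (a b r : ℝ) (hr : 0 < r) :
    IntegrableOn (fun t : ℝ => t ^ (n - 1) • (hprof a b r t / t ^ ((n:ℝ) + 2 * s))) (Set.Ioi 0) ∧
    ∫ t in Set.Ioi (0:ℝ), t ^ (n - 1) • (hprof a b r t / t ^ ((n:ℝ) + 2 * s)) =
      a * (r ^ (2 - 2 * s) / (2 - 2 * s)) + b * (r ^ (1 - 2 * s) / (2 * s - 1)) := by
  have hn1 : ((n - 1 : ℕ) : ℝ) = (n:ℝ) - 1 := by push_cast [hn]; ring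
  have e1 : Set.EqOn (fun t : ℝ => t ^ (n - 1) • (hprof a b r t / t ^ ((n:ℝ) + 2 * s)))
      (fun t => a * t ^ (1 - 2 * s)) (Set.Ioc 0 r) := by
    intro t ht
    have ht0 := ht.1
    simp only [hprof, if_pos ht.2, smul_eq_mul]
    rw [← Real.rpow_natCast t (n-1), hn1, ← Real.rpow_natCast t 2, mul_div_assoc, ← Real.rpow_sub ht0,
      mul_left_comm, ← Real.rpow_add ht0]
    congr 2; push_cast; ring
  have e2 : Set.EqOn (fun t : ℝ => t ^ (n - 1) • (hprof a b r t / t ^ ((n:ℝ) + 2 * s)))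
      (fun t => b * t ^ (- 2 * s)) (Set.Ioi r) := by
    intro t ht
    have ht0 : 0 < t := hr.trans ht
    simp only [hprof, if_neg (not_le.2 (Set.mem_Ioi.1 ht)), smul_eq_mul]
    rw [← Real.rpow_natCast t (n-1), hn1, mul_div_assoc]
    nth_rw 2 [← Real.rpow_one t]
    rw [← Real.rpow_sub ht0, mul_left_comm, ← Real.rpow_add ht0]
    congr 2; ring
  have i1' : IntegrableOn (fun t : ℝ => a * t ^ (1 - 2 * s)) (Set.Ioc 0 r) := by
    have := intervalIntegral.intervalIntegrable_rpow' (a := 0) (b := r) (r := 1 - 2 * s) (by linarith)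
    rw [intervalIntegrable_iff_integrableOn_Ioc_of_le hr.le] at this
    exact this.const_mul a
  have i2' : IntegrableOn (fun t : ℝ => b * t ^ (- 2 * s)) (Set.Ioi r) :=
    (integrableOn_Ioi_rpow_of_lt (by linarith) hr).const_mul b
  have i1 := i1'.congr_fun e1.symm measurableSet_Ioc
  have i2 := i2'.congr_fun e2.symm measurableSet_Ioi
  have hU : Set.Ioi (0:ℝ) = Set.Ioc 0 r ∪ Set.Ioi r := (Set.Ioc_union_Ioi_eq_Ioi hr.le).symm
  rw [hU]
  refine ⟨i1.union i2, ?_⟩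
  rw [setIntegral_union (Set.Ioc_disjoint_Ioi le_rfl) measurableSet_Ioi i1 i2,
    setIntegral_congr_fun measurableSet_Ioc e1, setIntegral_congr_fun measurableSet_Ioi e2,
    integral_const_mul, integral_const_mul, integral_Ioi_rpow_of_lt (by linarith) hr,
    ← intervalIntegral.integral_of_le hr.le, integral_rpow (Or.inl (by linarith)),
    Real.zero_rpow (by linarith)]
  have : (1 - 2 * s) ≠ 0 := by linarith
  have : (2 * s - 1) ≠ 0 := by linarith
  have e3 : 1 - 2 * s + 1 = 2 - 2 * s := by ring
  have e4 : -2 * s + 1 = 1 - 2 * s := by ring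
  rw [e3, e4, sub_zero]
  congr 2
  rw [neg_div, ← div_neg, neg_sub]

lemma aux_radial {s : ℝ} (hs : 1/2 < s) (hs1 : s < 1) (n : ℕ) (hn : 1 ≤ n) (a b r : ℝ) (hr : 0 < r) :
    Integrable (fun z : EuclideanSpace ℝ (Fin n) => hprof a b r ‖z‖ / ‖z‖ ^ ((n:ℝ) + 2 * s)) ∧
    ∫ z : EuclideanSpace ℝ (Fin n), hprof a b r ‖z‖ / ‖z‖ ^ ((n:ℝ) + 2 * s) =
      surfOmega n * (a * (r ^ (2 - 2 * s) / (2 - 2 * s)) + b * (r ^ (1 - 2 * s) / (2 * s - 1))) := by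
  have : Nonempty (Fin n) := ⟨⟨0, hn⟩⟩
  obtain ⟨h1, h2⟩ := aux_radial1 hs hs1 n hn a b r hr
  constructor
  · have := integrable_fun_norm_addHaar (volume : Measure (EuclideanSpace ℝ (Fin n)))
      (f := fun t => hprof a b r t / t ^ ((n:ℝ) + 2 * s))
    rw [finrank_euclideanSpace_fin] at this
    exact this.2 h1
  · have := integral_fun_norm_addHaar (volume : Measure (EuclideanSpace ℝ (Fin n)))
      (f := fun t => hprof a b r t / t ^ ((n:ℝ) + 2 * s))
    rw [finrank_euclideanSpace_fin, h2] at this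
    rw [this, ← aux_omega n hn, nsmul_eq_mul, smul_eq_mul, mul_assoc]

/-- the linear equiv of an invertible matrix -/
noncomputable def Teq {n : ℕ} (A : Matrix (Fin n) (Fin n) ℝ) (hA : A.det = 1) :
    EuclideanSpace ℝ (Fin n) ≃ₗ[ℝ] EuclideanSpace ℝ (Fin n) :=
  LinearEquiv.ofLinearMap (Matrix.toEuclideanLin A) (Matrix.toEuclideanLin A⁻¹)
    (by
      ext1 v
      have : A * A⁻¹ = 1 := Matrix.mul_nonsing_inv A (by simp [hA])
      simp [Matrix.toLpLin_apply, this])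
    (by
      ext1 v
      have : A⁻¹ * A = 1 := Matrix.nonsing_inv_mul A (by simp [hA])
      simp [Matrix.toLpLin_apply, this])

lemma Teq_apply {n : ℕ} (A : Matrix (Fin n) (Fin n) ℝ) (hA : A.det = 1) (z : EuclideanSpace ℝ (Fin n)) :
    Teq A hA z = WithLp.toLp 2 (A *ᵥ z.ofLp) := rfl

lemma aux_cov {n : ℕ} (s : ℝ) (A : Matrix (Fin n) (Fin n) ℝ) (hA : A.det = 1)
    (u : EuclideanSpace ℝ (Fin n) → ℝ) (x : EuclideanSpace ℝ (Fin n)) :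
    ∫ y, kernelA s A u x y = ∫ z, delta2 u x (Teq A hA z) / ‖z‖ ^ ((n:ℝ) + 2 * s) := by
  have hdet : LinearMap.det ((Teq A hA : EuclideanSpace ℝ (Fin n) ≃ₗ[ℝ] _) :
      EuclideanSpace ℝ (Fin n) →ₗ[ℝ] EuclideanSpace ℝ (Fin n)) = 1 := by
    have : ((Teq A hA : EuclideanSpace ℝ (Fin n) ≃ₗ[ℝ] _) :
      EuclideanSpace ℝ (Fin n) →ₗ[ℝ] EuclideanSpace ℝ (Fin n)) = Matrix.toEuclideanLin A := rfl
    rw [this, Matrix.toEuclideanLin, Matrix.toLpLin_eq_toLin, LinearMap.det_toLin, hA]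
  have hmap := Measure.map_linearMap_addHaar_eq_smul_addHaar
    (volume : Measure (EuclideanSpace ℝ (Fin n))) (f := (Teq A hA).toLinearMap) (by rw [hdet]; simp)
  rw [hdet] at hmap
  have hmp : MeasurePreserving (Teq A hA) volume volume := by
    refine ⟨(Teq A hA).toContinuousLinearEquiv.continuous.measurable, ?_⟩
    simpa using hmap
  rw [← hmp.integral_comp (Teq A hA).toContinuousLinearEquiv.toHomeomorph.measurableEmbedding]
  congr 1; ext z
  unfold kernelA
  congr 3
  have h := (Teq A hA).symm_apply_apply z
  conv_rhs => rw [← h]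
  rfl

/-- quadratic form of a matrix -/
noncomputable def Qf {n : ℕ} (M : Matrix (Fin n) (Fin n) ℝ) (y : EuclideanSpace ℝ (Fin n)) : ℝ :=
  y.ofLp ⬝ᵥ (M *ᵥ y.ofLp)

lemma hess_apply' {n : ℕ} {u : EuclideanSpace ℝ (Fin n) → ℝ} (hC2 : ContDiff ℝ 2 u)
    (x : EuclideanSpace ℝ (Fin n)) (i j : Fin n) :
    hess u x i j = fderiv ℝ (fderiv ℝ u) x (EuclideanSpace.single i (1:ℝ)) (EuclideanSpace.single j (1:ℝ)) := by
  have hd : DifferentiableAt ℝ (fderiv ℝ u) x :=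
    ((hC2.fderiv_right (m := 1) (by norm_num)).differentiable (by norm_num)) x
  simp only [hess, Matrix.of_apply]
  rw [fderiv_clm_apply hd (differentiableAt_const _)]
  simp

lemma hess_quad {n : ℕ} {u : EuclideanSpace ℝ (Fin n) → ℝ} (hC2 : ContDiff ℝ 2 u)
    (x y : EuclideanSpace ℝ (Fin n)) :
    fderiv ℝ (fderiv ℝ u) x y y = Qf (hess u x) y := by
  have hy : y = ∑ i, y i • EuclideanSpace.single i (1:ℝ) := by
    have := (EuclideanSpace.basisFun (Fin n) ℝ).sum_repr y
    simpa using this.symm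
  conv_lhs => rw [hy]
  simp only [map_sum, map_smul, _root_.sum_apply, _root_.smul_apply,
    Qf, dotProduct, mulVec, hess_apply' hC2, Finset.mul_sum, smul_eq_mul]
  rw [Finset.sum_comm]
  refine Finset.sum_congr rfl fun i _ => Finset.sum_congr rfl fun j _ => ?_
  ring

lemma hess_herm {n : ℕ} {u : EuclideanSpace ℝ (Fin n) → ℝ} (hC2 : ContDiff ℝ 2 u)
    (x : EuclideanSpace ℝ (Fin n)) : (hess u x).IsHermitian := by
  have h := (hC2.contDiffAt (x := x)).isSymmSndFDerivAt (by simp)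
  ext i j
  simp only [conjTranspose_apply, star_trivial, hess_apply' hC2]
  exact h.eq _ _

lemma taylor2 {n : ℕ} {u : EuclideanSpace ℝ (Fin n) → ℝ} (hC2 : ContDiff ℝ 2 u)
    (x : EuclideanSpace ℝ (Fin n)) {ε : ℝ} (hε : 0 < ε) :
    ∃ r > 0, ∀ y : EuclideanSpace ℝ (Fin n), ‖y‖ ≤ r → |delta2 u x y - Qf (hess u x) y| ≤ ε * ‖y‖ ^ 2 := by
  have hd : DifferentiableAt ℝ (fderiv ℝ u) x :=
    ((hC2.fderiv_right (m := 1) (by norm_num)).differentiable (by norm_num)) x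
  have hu : Differentiable ℝ u := hC2.differentiable (by norm_num)
  have hlo := hd.hasFDerivAt.isLittleO.def (c := ε / 2) (by positivity)
  rw [Metric.eventually_nhds_iff] at hlo
  obtain ⟨r, hr, h⟩ := hlo
  refine ⟨r / 2, by positivity, fun y hy => ?_⟩
  rw [← hess_quad hC2]
  set B := fderiv ℝ (fderiv ℝ u) x with hB
  have hb : ∀ v : EuclideanSpace ℝ (Fin n), ‖v‖ ≤ ‖y‖ →
      |fderiv ℝ u (x + v) y - fderiv ℝ u x y - B v y| ≤ ε / 2 * ‖y‖ * ‖y‖ := by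
    intro v hv
    have h1 := @h (x + v) (by simp [dist_eq_norm]; linarith)
    simp only [add_sub_cancel_left] at h1
    have h2 := (fderiv ℝ u (x + v) - fderiv ℝ u x - B v).le_opNorm y
    simp only [_root_.sub_apply, Real.norm_eq_abs] at h2
    refine h2.trans ?_
    gcongr
    refine h1.trans ?_
    gcongr
  let g : ℝ → ℝ := fun t => u (x + t • y) + u (x - t • y) - 2 * u x - t ^ 2 * B y y
  let g' : ℝ → ℝ := fun t => fderiv ℝ u (x + t • y) y + fderiv ℝ u (x - t • y) (-y) - 2 * t * B y y
  have hg : ∀ t ∈ Set.Icc (0:ℝ) 1, HasDerivWithinAt g (g' t) (Set.Icc (0:ℝ) 1) t := by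
    intro t _
    apply HasDerivAt.hasDerivWithinAt
    have a1 : HasDerivAt (fun t : ℝ => x + t • y) y t := by
      simpa using ((hasDerivAt_id t).smul_const y).const_add x
    have a2 : HasDerivAt (fun t : ℝ => x - t • y) (-y) t := by
      simpa using ((hasDerivAt_id t).smul_const y).const_sub x
    have b1 := (hu (x + t • y)).hasFDerivAt.comp_hasDerivAt t a1
    have b2 := (hu (x - t • y)).hasFDerivAt.comp_hasDerivAt t a2
    have c := ((hasDerivAt_pow 2 t).mul_const (B y y))
    have := ((b1.add b2).sub_const (2 * u x)).sub c
    have e : g' t = fderiv ℝ u (x + t • y) y + fderiv ℝ u (x - t • y) (-y) -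
        (2:ℕ) * t ^ (2 - 1) * B y y := by
      simp [g']
    rw [e]
    exact this
  have key := norm_image_sub_le_of_norm_deriv_le_segment_01' (C := ε * ‖y‖ ^ 2) hg (by
    intro t ht
    have hty : ‖t • y‖ ≤ ‖y‖ := by
      rw [norm_smul, Real.norm_of_nonneg ht.1]
      exact mul_le_of_le_one_left (norm_nonneg _) ht.2.le
    have h1 := hb (t • y) hty
    have h2 := hb (-(t • y)) (by rwa [norm_neg])
    simp only [map_neg, map_smul, _root_.neg_apply, _root_.smul_apply,
      smul_eq_mul, ← sub_eq_add_neg] at h1 h2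
    simp only [g', Real.norm_eq_abs, map_neg]
    rw [abs_le] at h1 h2 ⊢
    constructor <;> nlinarith)
  simpa [g, delta2, ← two_mul] using key

lemma delta_nonneg {n : ℕ} {u : EuclideanSpace ℝ (Fin n) → ℝ} (hconv : ConvexOn ℝ Set.univ u)
    (x y : EuclideanSpace ℝ (Fin n)) : 0 ≤ delta2 u x y := by
  have := hconv.2 (Set.mem_univ (x + y)) (Set.mem_univ (x - y)) (show (0:ℝ) ≤ 1/2 by norm_num)
    (show (0:ℝ) ≤ 1/2 by norm_num) (by norm_num)
  have e : (1/2:ℝ) • (x + y) + (1/2:ℝ) • (x - y) = x := by module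
  rw [e] at this
  simp only [smul_eq_mul] at this
  unfold delta2; linarith

lemma delta_mono {n : ℕ} {u : EuclideanSpace ℝ (Fin n) → ℝ} (hconv : ConvexOn ℝ Set.univ u)
    (x y : EuclideanSpace ℝ (Fin n)) {t : ℝ} (ht : 0 ≤ t) (ht1 : t ≤ 1) :
    delta2 u x (t • y) ≤ t * delta2 u x y := by
  have h1 := hconv.2 (Set.mem_univ (x + y)) (Set.mem_univ x)
    ht (show 0 ≤ 1 - t by linarith) (by ring)
  have h2 := hconv.2 (Set.mem_univ (x - y)) (Set.mem_univ x)
    ht (show 0 ≤ 1 - t by linarith) (by ring)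
  have e1 : t • (x + y) + (1 - t) • x = x + t • y := by module
  have e2 : t • (x - y) + (1 - t) • x = x - t • y := by module
  rw [e1] at h1; rw [e2] at h2
  simp only [smul_eq_mul] at h1 h2
  unfold delta2; linarith

lemma delta_lip {n : ℕ} {u : EuclideanSpace ℝ (Fin n) → ℝ} {L : ℝ}
    (hLip : ∀ a b : EuclideanSpace ℝ (Fin n), |u a - u b| ≤ L * ‖a - b‖)
    (x y : EuclideanSpace ℝ (Fin n)) : delta2 u x y ≤ 2 * |L| * ‖y‖ := by
  have h1 := (abs_le.1 (hLip (x + y) x)).2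
  have h2 := (abs_le.1 (hLip (x - y) x)).2
  simp only [add_sub_cancel_left, sub_sub_cancel_left, norm_neg] at h1 h2
  have := mul_le_mul_of_nonneg_right (le_abs_self L) (norm_nonneg y)
  unfold delta2; linarith

lemma Qf_smul {n : ℕ} (M : Matrix (Fin n) (Fin n) ℝ) (t : ℝ) (y : EuclideanSpace ℝ (Fin n)) :
    Qf M (t • y) = t ^ 2 * Qf M y := by
  simp [Qf, mulVec_smul]; ring

lemma hess_psd {n : ℕ} {u : EuclideanSpace ℝ (Fin n) → ℝ} (hconv : ConvexOn ℝ Set.univ u)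
    (hC2 : ContDiff ℝ 2 u) (x : EuclideanSpace ℝ (Fin n)) : (hess u x).PosSemidef := by
  have key : ∀ y : EuclideanSpace ℝ (Fin n), 0 ≤ Qf (hess u x) y := by
    intro y
    by_cases hy : y = 0
    · simp [hy, Qf]
    have hy' : 0 < ‖y‖ := norm_pos_iff.2 hy
    by_contra hneg
    push Not at hneg
    obtain ⟨r, hr, h⟩ := taylor2 hC2 x (ε := -Qf (hess u x) y / (2 * ‖y‖ ^ 2)) (by
      apply div_pos <;> [linarith; positivity])
    have hz : ‖(r / ‖y‖) • y‖ = r := by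
      rw [norm_smul, Real.norm_of_nonneg (by positivity)]; field_simp
    have h1 := (abs_le.1 (h ((r / ‖y‖) • y) hz.le)).2
    have h2 := delta_nonneg hconv x ((r / ‖y‖) • y)
    rw [Qf_smul, hz] at h1
    have e : -Qf (hess u x) y / (2 * ‖y‖ ^ 2) * r ^ 2 = -((r / ‖y‖) ^ 2 * Qf (hess u x) y) / 2 := by
      field_simp
    rw [e] at h1
    have : (r / ‖y‖) ^ 2 * Qf (hess u x) y < 0 := mul_neg_of_pos_of_neg (by positivity) hneg
    linarith
  refine Matrix.PosSemidef.of_dotProduct_mulVec_nonneg (hess_herm hC2 x) fun v => ?_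
  simpa [Qf] using key (WithLp.toLp 2 v)

lemma exists_opt {n : ℕ} (hn : 1 ≤ n) {P : Matrix (Fin n) (Fin n) ℝ} (hP : P.PosDef) :
    ∃ A : Matrix (Fin n) (Fin n) ℝ, A.PosDef ∧ A.det = 1 ∧
      A * P * A = (P.det ^ ((1:ℝ) / n)) • (1 : Matrix (Fin n) (Fin n) ℝ) := by
  classical
  have hn0 : (n:ℝ) ≠ 0 := by positivity
  obtain ⟨S, hS, hSS⟩ : ∃ S : Matrix (Fin n) (Fin n) ℝ, S.PosDef ∧ S * S = P := by
    open scoped MatrixOrder in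
    have h0 : (CFC.sqrt P).PosSemidef := (CFC.sqrt_nonneg P).posSemidef
    have h1 : CFC.sqrt P * CFC.sqrt P = P := by
      rw [← sq]; exact CFC.sq_sqrt P hP.posSemidef.nonneg
    refine ⟨CFC.sqrt P, h0.posDef_iff_det_ne_zero.2 fun h => ?_, h1⟩
    have := congrArg Matrix.det h1
    rw [Matrix.det_mul, h] at this
    exact hP.det_pos.ne' (by simpa using this.symm)
  have hd := hS.det_pos
  have hu : IsUnit S.det := hd.ne'.isUnit
  set c : ℝ := S.det ^ ((1:ℝ) / n) with hc
  have hcpos : 0 < c := Real.rpow_pos_of_pos hd _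
  have hcn : c ^ n = S.det := by
    rw [hc, ← Real.rpow_natCast, ← Real.rpow_mul hd.le, one_div, inv_mul_cancel₀ hn0, Real.rpow_one]
  refine ⟨c • S⁻¹, hS.inv.smul hcpos, ?_, ?_⟩
  · rw [Matrix.det_smul, Fintype.card_fin, hcn, Matrix.det_nonsing_inv, Ring.inverse_eq_inv',
      mul_inv_cancel₀ hd.ne']
  · have e : S⁻¹ * (S * S) * S⁻¹ = 1 := by
      rw [← Matrix.mul_assoc, Matrix.nonsing_inv_mul _ hu, Matrix.one_mul, Matrix.mul_nonsing_inv _ hu]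
    rw [← hSS, Matrix.smul_mul, Matrix.smul_mul, Matrix.mul_smul, e, smul_smul, Matrix.det_mul,
      Real.mul_rpow hd.le hd.le]

lemma Qf_Teq {n : ℕ} (H A : Matrix (Fin n) (Fin n) ℝ) (hA : A.det = 1) (hAh : A.IsHermitian)
    (z : EuclideanSpace ℝ (Fin n)) : Qf H (Teq A hA z) = Qf (A * H * A) z := by
  have hT : Aᵀ = A := (conjTranspose_eq_transpose_of_trivial A).symm.trans hAh
  rw [Teq_apply]
  simp only [Qf]
  rw [← Matrix.mulVec_mulVec, ← Matrix.mulVec_mulVec]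
  conv_rhs => rw [Matrix.dotProduct_mulVec, ← Matrix.mulVec_transpose, hT]

lemma Qf_eigen {n : ℕ} {M : Matrix (Fin n) (Fin n) ℝ} (hM : M.IsHermitian)
    (z : EuclideanSpace ℝ (Fin n)) :
    Qf M z = ∑ i, hM.eigenvalues i * (hM.eigenvectorBasis.repr z i) ^ 2 := by
  have hT : Mᵀ = M := (conjTranspose_eq_transpose_of_trivial M).symm.trans hM
  have h1 : Qf M z = inner ℝ (WithLp.toLp 2 (M *ᵥ z.ofLp)) z := by
    simp [Qf, EuclideanSpace.inner_eq_star_dotProduct]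
  rw [h1, ← hM.eigenvectorBasis.sum_inner_mul_inner]
  refine Finset.sum_congr rfl fun i _ => ?_
  have h2 : inner ℝ (WithLp.toLp 2 (M *ᵥ z.ofLp)) (hM.eigenvectorBasis i) =
      hM.eigenvalues i * inner ℝ (hM.eigenvectorBasis i) z := by
    rw [EuclideanSpace.inner_eq_star_dotProduct, EuclideanSpace.inner_eq_star_dotProduct]
    simp only [star_trivial]
    rw [Matrix.dotProduct_mulVec, ← Matrix.mulVec_transpose, hT, hM.mulVec_eigenvectorBasis,
      smul_dotProduct, smul_eq_mul, dotProduct_comm]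
  rw [h2, OrthonormalBasis.repr_apply_apply]; ring

lemma norm_repr_sq {n : ℕ} {M : Matrix (Fin n) (Fin n) ℝ} (hM : M.IsHermitian)
    (z : EuclideanSpace ℝ (Fin n)) :
    ‖z‖ ^ 2 = ∑ i, (hM.eigenvectorBasis.repr z i) ^ 2 := by
  rw [← hM.eigenvectorBasis.repr.norm_map z, EuclideanSpace.norm_sq_eq]
  simp

lemma Qf_lower {n : ℕ} (hn : 1 ≤ n) {M : Matrix (Fin n) (Fin n) ℝ} (hM : M.PosDef) :
    ∃ m > 0, ∀ z, m * ‖z‖ ^ 2 ≤ Qf M z := by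
  have : Nonempty (Fin n) := ⟨⟨0, hn⟩⟩
  obtain ⟨i, hi⟩ := Finite.exists_min hM.1.eigenvalues
  refine ⟨hM.1.eigenvalues i, hM.eigenvalues_pos i, fun z => ?_⟩
  rw [Qf_eigen hM.1, norm_repr_sq hM.1, Finset.mul_sum]
  exact Finset.sum_le_sum fun j _ => mul_le_mul_of_nonneg_right (hi j) (sq_nonneg _)

/-- truncated profile -/
noncomputable def psi (ρ q : ℝ) : ℝ := min q (ρ * Real.sqrt q)

lemma psi_concave {ρ : ℝ} (hρ : 0 ≤ ρ) : ConcaveOn ℝ (Set.Ici 0) (psi ρ) := by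
  have h1 : ConcaveOn ℝ (Set.Ici (0:ℝ)) (fun q : ℝ => q) := concaveOn_id (convex_Ici 0)
  have h2 : ConcaveOn ℝ (Set.Ici (0:ℝ)) (fun q : ℝ => ρ * Real.sqrt q) :=
    Real.strictConcaveOn_sqrt.concaveOn.smul hρ
  exact h1.inf h2

lemma psi_hprof {ρ l t : ℝ} (_hρ : 0 < ρ) (hl : 0 < l) (ht : 0 ≤ t) :
    psi ρ (l * t ^ 2) = hprof l (ρ * Real.sqrt l) (ρ / Real.sqrt l) t := by
  have hs : 0 < Real.sqrt l := Real.sqrt_pos.2 hl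
  have hss : Real.sqrt l ^ 2 = l := Real.sq_sqrt hl.le
  have e : Real.sqrt (l * t ^ 2) = Real.sqrt l * t := by
    rw [Real.sqrt_mul hl.le, Real.sqrt_sq ht]
  unfold psi hprof
  rw [e]
  have e2 : l * t ^ 2 = Real.sqrt l * t * (Real.sqrt l * t) := by linear_combination -t ^ 2 * hss
  split_ifs with h
  · rw [le_div_iff₀ hs] at h
    apply min_eq_left
    rw [e2]
    exact mul_le_mul_of_nonneg_right (by linarith) (by positivity)
  · push Not at h
    rw [div_lt_iff₀ hs] at h
    rw [mul_assoc]
    apply min_eq_right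
    rw [e2]
    exact mul_le_mul_of_nonneg_right (by linarith) (by positivity)

lemma sym_int {n : ℕ} (hn : 1 ≤ n) (g : ℝ → ℝ) (hg0 : g 0 = 0)
    (hg : Integrable (fun w : EuclideanSpace ℝ (Fin n) => g ‖w‖)) (i : Fin n) :
    Integrable (fun w : EuclideanSpace ℝ (Fin n) => w i ^ 2 / ‖w‖ ^ 2 * g ‖w‖) ∧
    ∫ w : EuclideanSpace ℝ (Fin n), w i ^ 2 / ‖w‖ ^ 2 * g ‖w‖ =
      (1 / n) * ∫ w : EuclideanSpace ℝ (Fin n), g ‖w‖ := by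
  have hn0 : (n:ℝ) ≠ 0 := by positivity
  have hint : ∀ i, Integrable (fun w : EuclideanSpace ℝ (Fin n) => w i ^ 2 / ‖w‖ ^ 2 * g ‖w‖) := by
    intro i
    refine hg.bdd_mul (c := 1) (Measurable.aestronglyMeasurable (by fun_prop)) ?_
    refine Eventually.of_forall fun w => ?_
    rw [Real.norm_of_nonneg (by positivity)]
    refine div_le_one_of_le₀ ?_ (by positivity)
    rw [EuclideanSpace.norm_sq_eq]
    have := Finset.single_le_sum (f := fun i => ‖w i‖ ^ 2) (fun i _ => by positivity) (Finset.mem_univ i)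
    simpa using this
  have hsw : ∀ j, ∫ w : EuclideanSpace ℝ (Fin n), w j ^ 2 / ‖w‖ ^ 2 * g ‖w‖ =
      ∫ w : EuclideanSpace ℝ (Fin n), w i ^ 2 / ‖w‖ ^ 2 * g ‖w‖ := by
    intro j
    let σ := LinearIsometryEquiv.piLpCongrLeft 2 ℝ ℝ (Equiv.swap i j)
    have hmp : MeasurePreserving σ volume volume := σ.measurePreserving
    rw [← hmp.integral_comp σ.toHomeomorph.measurableEmbedding]
    congr 1; ext w
    rw [σ.norm_map]
    congr 3
    simp [σ, LinearIsometryEquiv.piLpCongrLeft_apply, Equiv.piCongrLeft']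
  refine ⟨hint i, ?_⟩
  have hsum : ∫ w : EuclideanSpace ℝ (Fin n), g ‖w‖ =
      ∑ j, ∫ w : EuclideanSpace ℝ (Fin n), w j ^ 2 / ‖w‖ ^ 2 * g ‖w‖ := by
    rw [← integral_finsetSum _ (fun j _ => hint j)]
    congr 1; ext w
    rw [← Finset.sum_mul, ← Finset.sum_div]
    by_cases hw : w = 0
    · simp [hw, hg0]
    · have : ∑ j, w j ^ 2 = ‖w‖ ^ 2 := by rw [EuclideanSpace.norm_sq_eq]; simp
      rw [this, div_self (by positivity), one_mul]
  rw [hsum, Finset.sum_congr rfl (fun j _ => hsw j)]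
  simp
  field_simp

lemma core_lower {s : ℝ} (hs : 1/2 < s) (hs1 : s < 1) {n : ℕ} (hn : 1 ≤ n)
    {M : Matrix (Fin n) (Fin n) ℝ} (hM : M.PosDef) {ρ κ : ℝ} (hρ : 0 < ρ) (hκ : 0 ≤ κ)
    (F : EuclideanSpace ℝ (Fin n) → ℝ)
    (hF : Integrable (fun z => F z / ‖z‖ ^ ((n:ℝ) + 2 * s)))
    (hle : ∀ z, κ * psi ρ (Qf M z) ≤ F z) :
    κ * (surfOmega n * (ρ ^ (2 - 2 * s) / (2 - 2 * s)) * M.det ^ (s / n)) ≤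
      ∫ z, F z / ‖z‖ ^ ((n:ℝ) + 2 * s) := by
  have hn0 : (0:ℝ) < n := by positivity
  have hp : (n:ℝ) + 2 * s ≠ 0 := by positivity
  set l := hM.1.eigenvalues with hl
  have hlpos : ∀ i, 0 < l i := hM.eigenvalues_pos
  set b := hM.1.eigenvectorBasis with hb
  let g : Fin n → ℝ → ℝ := fun i t =>
    hprof (l i) (ρ * Real.sqrt (l i)) (ρ / Real.sqrt (l i)) t / t ^ ((n:ℝ) + 2 * s)
  have hg0 : ∀ i, g i 0 = 0 := fun i => by simp [g, Real.zero_rpow hp]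
  have hrad := fun i => aux_radial hs hs1 n hn (l i) (ρ * Real.sqrt (l i)) (ρ / Real.sqrt (l i))
    (div_pos hρ (Real.sqrt_pos.2 (hlpos i)))
  have hsym := fun i => sym_int hn (g i) (hg0 i) (hrad i).1 i
  have hmp : MeasurePreserving b.repr volume volume := b.repr.measurePreserving
  have hme : MeasurableEmbedding b.repr := b.repr.toHomeomorph.measurableEmbedding
  have hI : ∀ i, Integrable (fun z : EuclideanSpace ℝ (Fin n) =>
      (b.repr z) i ^ 2 / ‖z‖ ^ 2 * g i ‖z‖) := by
    intro i
    have := (hmp.integrable_comp_emb hme).2 (hsym i).1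
    simpa [Function.comp_def] using this
  have hV : ∀ i, ∫ z : EuclideanSpace ℝ (Fin n), (b.repr z) i ^ 2 / ‖z‖ ^ 2 * g i ‖z‖ =
      (1 / n) * ∫ w : EuclideanSpace ℝ (Fin n), g i ‖w‖ := by
    intro i
    have h := hmp.integral_comp hme
      (fun w : EuclideanSpace ℝ (Fin n) => w i ^ 2 / ‖w‖ ^ 2 * g i ‖w‖)
    rw [← (hsym i).2, ← h]
    simp
  have hpt : ∀ z, κ * ∑ i, (b.repr z) i ^ 2 / ‖z‖ ^ 2 * g i ‖z‖ ≤ F z / ‖z‖ ^ ((n:ℝ) + 2 * s) := by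
    intro z
    by_cases hz : z = 0
    · simp [hz, Real.zero_rpow hp]
    have hzp : 0 < ‖z‖ := norm_pos_iff.2 hz
    have hden : 0 < ‖z‖ ^ ((n:ℝ) + 2 * s) := Real.rpow_pos_of_pos hzp _
    have hw1 : ∑ i, (b.repr z) i ^ 2 / ‖z‖ ^ 2 = 1 := by
      rw [← Finset.sum_div, ← norm_repr_sq hM.1, div_self (by positivity)]
    have hJ := (psi_concave hρ.le).le_map_sum (t := Finset.univ)
      (w := fun i => (b.repr z) i ^ 2 / ‖z‖ ^ 2) (p := fun i => l i * ‖z‖ ^ 2)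
      (fun i _ => by positivity) hw1
      (fun i _ => mul_nonneg (hlpos i).le (by positivity))
    have hQ : ∑ i, ((b.repr z) i ^ 2 / ‖z‖ ^ 2) • (l i * ‖z‖ ^ 2) = Qf M z := by
      rw [Qf_eigen hM.1]
      refine Finset.sum_congr rfl fun i _ => ?_
      rw [smul_eq_mul]; field_simp
      try ring
    rw [hQ] at hJ
    rw [le_div_iff₀ hden]
    refine le_trans ?_ (hle z)
    rw [mul_assoc]
    refine mul_le_mul_of_nonneg_left ?_ hκ
    refine le_trans (le_of_eq ?_) hJ
    rw [Finset.sum_mul]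
    refine Finset.sum_congr rfl fun i _ => ?_
    simp only [g, smul_eq_mul]
    rw [psi_hprof hρ (hlpos i) hzp.le, mul_assoc, div_mul_cancel₀ _ hden.ne']
  refine le_trans ?_ (integral_mono ((integrable_finsetSum _ fun i _ => hI i).const_mul κ) hF hpt)
  rw [integral_const_mul, integral_finsetSum _ fun i _ => hI i, Finset.sum_congr rfl fun i _ => hV i]
  refine mul_le_mul_of_nonneg_left ?_ hκ
  have hom := aux_omega_pos n hn
  set R := ρ ^ (2 - 2 * s) / (2 - 2 * s) with hR
  have hRpos : 0 < R := div_pos (Real.rpow_pos_of_pos hρ _) (by linarith)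
  have hterm : ∀ i, surfOmega n * R * (l i ^ s) ≤ ∫ w : EuclideanSpace ℝ (Fin n), g i ‖w‖ := by
    intro i
    simp only [g]
    rw [(hrad i).2, mul_assoc]
    refine mul_le_mul_of_nonneg_left ?_ hom.le
    have hsq := Real.sqrt_pos.2 (hlpos i)
    have e1 : l i * ((ρ / Real.sqrt (l i)) ^ (2 - 2 * s) / (2 - 2 * s)) = R * l i ^ s := by
      rw [Real.div_rpow hρ.le hsq.le, hR, Real.sqrt_eq_rpow, ← Real.rpow_mul (hlpos i).le]
      have : l i ^ s = l i / l i ^ (1 / 2 * (2 - 2 * s)) := by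
        nth_rw 2 [← Real.rpow_one (l i)]
        rw [← Real.rpow_sub (hlpos i)]; congr 1; ring
      rw [this]; ring
    rw [e1]
    have : 0 ≤ ρ * Real.sqrt (l i) * ((ρ / Real.sqrt (l i)) ^ (1 - 2 * s) / (2 * s - 1)) := by
      refine mul_nonneg (by positivity) (div_nonneg (Real.rpow_nonneg (by positivity) _) (by linarith))
    linarith
  calc surfOmega n * R * M.det ^ (s / n)
      ≤ surfOmega n * R * ((1 / n) * ∑ i, l i ^ s) := by
        refine mul_le_mul_of_nonneg_left ?_ (by positivity)
        have := Real.geom_mean_le_arith_mean_weighted Finset.univ (fun _ : Fin n => 1 / (n:ℝ))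
          (fun i => l i ^ s) (fun _ _ => by positivity) (by simp; field_simp)
          (fun i _ => Real.rpow_nonneg (hlpos i).le _)
        rw [← Finset.mul_sum] at this
        refine le_trans (le_of_eq ?_) this
        rw [hM.1.det_eq_prod_eigenvalues]
        simp only [RCLike.ofReal_real_eq_id, id]
        rw [← Real.finsetProd_rpow _ _ (fun i _ => (hlpos i).le)]
        refine Finset.prod_congr rfl fun i _ => ?_
        rw [← Real.rpow_mul (hlpos i).le]; congr 1; ring
    _ = ∑ i, 1 / (n:ℝ) * (surfOmega n * R * l i ^ s) := by
        rw [Finset.mul_sum, Finset.mul_sum]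
        exact Finset.sum_congr rfl fun i _ => by ring
    _ ≤ _ := Finset.sum_le_sum fun i _ => mul_le_mul_of_nonneg_left (hterm i) (by positivity)

lemma core_upper {s : ℝ} (hs : 1/2 < s) (hs1 : s < 1) {n : ℕ} (hn : 1 ≤ n)
    {u : EuclideanSpace ℝ (Fin n) → ℝ} (hconv : ConvexOn ℝ Set.univ u) (hu : Continuous u)
    (x : EuclideanSpace ℝ (Fin n)) (A : Matrix (Fin n) (Fin n) ℝ) (hA : A.det = 1)
    {a b r : ℝ} (hr : 0 < r)
    (h1 : ∀ z, ‖z‖ ≤ r → delta2 u x (Teq A hA z) ≤ a * ‖z‖ ^ 2)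
    (h2 : ∀ z, delta2 u x (Teq A hA z) ≤ b * ‖z‖) :
    Integrable (fun z => delta2 u x (Teq A hA z) / ‖z‖ ^ ((n:ℝ) + 2 * s)) ∧
    ∫ z, delta2 u x (Teq A hA z) / ‖z‖ ^ ((n:ℝ) + 2 * s) ≤
      surfOmega n * (a * (r ^ (2 - 2 * s) / (2 - 2 * s)) + b * (r ^ (1 - 2 * s) / (2 * s - 1))) := by
  obtain ⟨hI, hV⟩ := aux_radial hs hs1 n hn a b r hr
  have hle : ∀ z : EuclideanSpace ℝ (Fin n), delta2 u x (Teq A hA z) / ‖z‖ ^ ((n:ℝ) + 2 * s) ≤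
      hprof a b r ‖z‖ / ‖z‖ ^ ((n:ℝ) + 2 * s) := by
    intro z
    refine div_le_div_of_nonneg_right ?_ (Real.rpow_nonneg (norm_nonneg _) _)
    unfold hprof
    split_ifs with h
    · exact h1 z h
    · exact h2 z
  have hT : Continuous (Teq A hA) := (Teq A hA).toContinuousLinearEquiv.continuous
  have hint : Integrable (fun z => delta2 u x (Teq A hA z) / ‖z‖ ^ ((n:ℝ) + 2 * s)) := by
    refine hI.mono' ?_ (Eventually.of_forall fun z => ?_)
    · refine Measurable.aestronglyMeasurable (Measurable.div ?_ (by fun_prop))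
      apply Continuous.measurable
      unfold delta2
      fun_prop
    · rw [Real.norm_of_nonneg (div_nonneg (delta_nonneg hconv _ _) (Real.rpow_nonneg (norm_nonneg _) _))]
      exact hle z
  exact ⟨hint, hV ▸ integral_mono hint hI hle⟩

lemma Teq_bound {n : ℕ} (A : Matrix (Fin n) (Fin n) ℝ) (hA : A.det = 1) :
    ∃ K > 0, ∀ z, ‖Teq A hA z‖ ≤ K * ‖z‖ := by
  let T := (Teq A hA).toContinuousLinearEquiv.toContinuousLinearMap
  refine ⟨‖T‖ + 1, by positivity, fun z => ?_⟩
  have := T.le_opNorm z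
  have h : T z = Teq A hA z := rfl
  rw [h] at this
  linarith [norm_nonneg z]

lemma delta_integrable {s : ℝ} (hs : 1/2 < s) (hs1 : s < 1) {n : ℕ} (hn : 1 ≤ n)
    {u : EuclideanSpace ℝ (Fin n) → ℝ} (hconv : ConvexOn ℝ Set.univ u) (hC2 : ContDiff ℝ 2 u) {L : ℝ}
    (hLip : ∀ a b : EuclideanSpace ℝ (Fin n), |u a - u b| ≤ L * ‖a - b‖)
    (x : EuclideanSpace ℝ (Fin n)) (A : Matrix (Fin n) (Fin n) ℝ) (hA : A.det = 1) :
    Integrable (fun z => delta2 u x (Teq A hA z) / ‖z‖ ^ ((n:ℝ) + 2 * s)) := by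
  obtain ⟨K, hK, hKb⟩ := Teq_bound A hA
  obtain ⟨r, hr, h⟩ := taylor2 hC2 x one_pos
  set B := fderiv ℝ (fderiv ℝ u) x
  refine (core_upper hs hs1 hn hconv hC2.continuous x A hA (a := (‖B‖ + 1) * K ^ 2) (b := 2 * |L| * K)
    (r := r / K) (by positivity) (fun z hz => ?_) (fun z => ?_)).1
  · have hz' : ‖Teq A hA z‖ ≤ r := by
      refine (hKb z).trans ?_
      rw [le_div_iff₀ hK] at hz; linarith
    have h1 := (abs_le.1 (h _ hz')).2
    rw [← hess_quad hC2] at h1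
    have h2 := (le_abs_self _).trans (B.le_opNorm₂ (Teq A hA z) (Teq A hA z))
    have h3 : ‖Teq A hA z‖ ^ 2 ≤ (K * ‖z‖) ^ 2 := pow_le_pow_left₀ (norm_nonneg _) (hKb z) 2
    calc delta2 u x (Teq A hA z) ≤ (‖B‖ + 1) * ‖Teq A hA z‖ ^ 2 := by nlinarith
      _ ≤ (‖B‖ + 1) * (K * ‖z‖) ^ 2 := mul_le_mul_of_nonneg_left h3 (by positivity)
      _ = _ := by ring
  · refine (delta_lip hLip x _).trans ?_
    rw [mul_assoc (2 * |L|)]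
    exact mul_le_mul_of_nonneg_left (hKb z) (by positivity)

lemma delta_lower {n : ℕ} (hn : 1 ≤ n)
    {u : EuclideanSpace ℝ (Fin n) → ℝ} (hconv : ConvexOn ℝ Set.univ u) (hC2 : ContDiff ℝ 2 u)
    (x : EuclideanSpace ℝ (Fin n)) (hH : (hess u x).PosDef) {η : ℝ} (hη : 0 < η) (hη1 : η < 1) :
    ∃ ρ > 0, ∀ y, (1 - η) * psi ρ (Qf (hess u x) y) ≤ delta2 u x y := by
  obtain ⟨m, hm, hmQ⟩ := Qf_lower hn hH
  obtain ⟨r, hr, h⟩ := taylor2 hC2 x (ε := η * m) (by positivity)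
  have hloc : ∀ y : EuclideanSpace ℝ (Fin n), ‖y‖ ≤ r → (1 - η) * Qf (hess u x) y ≤ delta2 u x y := by
    intro y hy
    have h1 := (abs_le.1 (h y hy)).1
    have h2 := hmQ y
    nlinarith
  refine ⟨r * Real.sqrt m, by positivity, fun y => ?_⟩
  set Q := Qf (hess u x) y with hQ
  have hη' : 0 ≤ 1 - η := by linarith
  rcases le_or_gt ‖y‖ r with hy | hy
  · exact (mul_le_mul_of_nonneg_left (min_le_left _ _) hη').trans (hloc y hy)
  · have hyp : 0 < ‖y‖ := hr.trans hy
    have hQ0 : 0 ≤ Q := le_trans (by positivity) (hmQ y)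
    set t := r / ‖y‖ with ht
    have ht0 : 0 < t := by positivity
    have ht1 : t ≤ 1 := by rw [ht, div_le_one hyp]; exact hy.le
    have hz : ‖t • y‖ ≤ r := by
      rw [norm_smul, Real.norm_of_nonneg ht0.le, ht]; field_simp; exact le_rfl
    have h1 := hloc _ hz
    rw [Qf_smul] at h1
    have h2 := h1.trans (delta_mono hconv x y ht0.le ht1)
    have h3 : (1 - η) * (t * Q) ≤ delta2 u x y := by
      refine le_of_mul_le_mul_left ?_ ht0
      calc t * ((1 - η) * (t * Q)) = (1 - η) * (t ^ 2 * Q) := by ring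
        _ ≤ _ := h2
    refine le_trans (mul_le_mul_of_nonneg_left ((min_le_right _ _).trans ?_) hη') h3
    have h4 : Real.sqrt m * ‖y‖ ≤ Real.sqrt Q := by
      rw [← Real.sqrt_sq hyp.le, ← Real.sqrt_mul hm.le]
      exact Real.sqrt_le_sqrt (hmQ y)
    have h5 : Real.sqrt Q * Real.sqrt Q = Q := Real.mul_self_sqrt hQ0
    calc r * Real.sqrt m * Real.sqrt Q = t * (Real.sqrt m * ‖y‖ * Real.sqrt Q) := by
          rw [ht]; field_simp
      _ ≤ t * (Real.sqrt Q * Real.sqrt Q) := by gcongr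
      _ = t * Q := by rw [h5]

lemma LA_nonneg {n : ℕ} {u : EuclideanSpace ℝ (Fin n) → ℝ} (hconv : ConvexOn ℝ Set.univ u) (s : ℝ)
    (x : EuclideanSpace ℝ (Fin n)) (A : Matrix (Fin n) (Fin n) ℝ) : 0 ≤ LA s A u x := by
  refine mul_nonneg (by norm_num) (integral_nonneg fun y => ?_)
  exact div_nonneg (delta_nonneg hconv _ _) (Real.rpow_nonneg (norm_nonneg _) _)

lemma LA_upper {n : ℕ} (hn : 1 ≤ n) {u : EuclideanSpace ℝ (Fin n) → ℝ}
    (hconv : ConvexOn ℝ Set.univ u) (hC2 : ContDiff ℝ 2 u)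
    {L : ℝ} (hLip : ∀ a b : EuclideanSpace ℝ (Fin n), |u a - u b| ≤ L * ‖a - b‖)
    (x : EuclideanSpace ℝ (Fin n)) {ε : ℝ} (hε : 0 < ε) :
    ∃ A : Matrix (Fin n) (Fin n) ℝ, A.PosDef ∧ A.det = 1 ∧ ∃ r : ℝ, 0 < r ∧ ∃ b : ℝ,
      ∀ s : ℝ, 1/2 < s → s < 1 → (1 - s) * LA s A u x ≤
        surfOmega n / 4 * ((hess u x + ε • 1).det ^ ((1:ℝ) / n)) * r ^ (2 - 2 * s) +
        (1 - s) * (surfOmega n / 2 * b * (r ^ (1 - 2 * s) / (2 * s - 1))) := by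
  have hP : (hess u x + ε • (1 : Matrix (Fin n) (Fin n) ℝ)).PosDef :=
    Matrix.PosDef.posSemidef_add (hess_psd hconv hC2 x) (Matrix.PosDef.one.smul hε)
  obtain ⟨A, hAp, hA, hAPA⟩ := exists_opt hn hP
  obtain ⟨K, hK, hKb⟩ := Teq_bound A hA
  obtain ⟨r, hr, h⟩ := taylor2 hC2 x hε
  refine ⟨A, hAp, hA, r / K, by positivity, 2 * |L| * K, fun s hs hs1 => ?_⟩
  set a := (hess u x + ε • (1 : Matrix (Fin n) (Fin n) ℝ)).det ^ ((1:ℝ) / n) with ha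
  have hsq : ∀ y : EuclideanSpace ℝ (Fin n), y.ofLp ⬝ᵥ y.ofLp = ‖y‖ ^ 2 := by
    intro y
    rw [EuclideanSpace.norm_sq_eq]
    simp [dotProduct, sq]
  have hup := (core_upper hs hs1 hn hconv hC2.continuous x A hA (a := a) (b := 2 * |L| * K)
    (r := r / K) (by positivity) (fun z hz => ?_) (fun z => ?_)).2
  · unfold LA
    rw [aux_cov s A hA]
    have h1s : 0 < 1 - s := by linarith
    have := mul_le_mul_of_nonneg_left hup (show 0 ≤ (1 - s) * (1 / 2) by positivity)
    rw [← mul_assoc]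
    refine this.trans (le_of_eq ?_)
    have e : (2 - 2 * s) = 2 * (1 - s) := by ring
    have e' : (r / K) ^ (2 - 2 * s) / (2 - 2 * s) = (r / K) ^ (2 - 2 * s) / (2 * (1 - s)) := by
      congr 1
    rw [e']
    generalize (r / K) ^ (2 - 2 * s) = X
    generalize (r / K) ^ (1 - 2 * s) / (2 * s - 1) = Y
    field_simp
    ring
  · have hz' : ‖Teq A hA z‖ ≤ r := by
      refine (hKb z).trans ?_
      rw [le_div_iff₀ hK] at hz; linarith
    have h1 := (abs_le.1 (h _ hz')).2
    have h2 : Qf (hess u x + ε • (1 : Matrix (Fin n) (Fin n) ℝ)) (Teq A hA z) =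
        Qf (hess u x) (Teq A hA z) + ε * ‖Teq A hA z‖ ^ 2 := by
      simp [Qf, add_mulVec, smul_mulVec, dotProduct_add, hsq]
    have h3 := Qf_Teq (hess u x + ε • (1 : Matrix (Fin n) (Fin n) ℝ)) A hA hAp.1 z
    have h4 : Qf (a • (1 : Matrix (Fin n) (Fin n) ℝ)) z = a * ‖z‖ ^ 2 := by
      simp [Qf, smul_mulVec, hsq]
    rw [hAPA, h4] at h3
    linarith
  · refine (delta_lip hLip x _).trans ?_
    rw [mul_assoc (2 * |L|)]
    exact mul_le_mul_of_nonneg_left (hKb z) (by positivity)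

lemma LA_lower {n : ℕ} (hn : 1 ≤ n) {u : EuclideanSpace ℝ (Fin n) → ℝ}
    (hconv : ConvexOn ℝ Set.univ u) (hC2 : ContDiff ℝ 2 u)
    {L : ℝ} (hLip : ∀ a b : EuclideanSpace ℝ (Fin n), |u a - u b| ≤ L * ‖a - b‖)
    (x : EuclideanSpace ℝ (Fin n)) (hH : (hess u x).PosDef) {η : ℝ} (hη : 0 < η) (hη1 : η < 1) :
    ∃ ρ : ℝ, 0 < ρ ∧ ∀ s : ℝ, 1/2 < s → s < 1 → ∀ A : Matrix (Fin n) (Fin n) ℝ, A.PosDef → A.det = 1 →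
      (1 - η) * (surfOmega n / 4 * ρ ^ (2 - 2 * s) * (hess u x).det ^ (s / n)) ≤
        (1 - s) * LA s A u x := by
  obtain ⟨ρ, hρ, h⟩ := delta_lower hn hconv hC2 x hH hη hη1
  refine ⟨ρ, hρ, fun s hs hs1 A hAp hA => ?_⟩
  have hinj : Function.Injective A.mulVec :=
    Matrix.mulVec_injective_of_isUnit ((Matrix.isUnit_iff_isUnit_det A).2 (by simp [hA]))
  have hM : (A * hess u x * A).PosDef := by
    have := hH.conjTranspose_mul_mul_same hinj
    rwa [show Aᴴ = A from hAp.1] at this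
  have hdet : (A * hess u x * A).det = (hess u x).det := by simp [hA]
  have hlow := core_lower hs hs1 hn hM hρ (show 0 ≤ 1 - η by linarith)
    (fun z => delta2 u x (Teq A hA z)) (delta_integrable hs hs1 hn hconv hC2 hLip x A hA)
    (fun z => by rw [← Qf_Teq (hess u x) A hA hAp.1]; exact h _)
  rw [hdet] at hlow
  unfold LA
  rw [aux_cov s A hA]
  have h1s : 0 < 1 - s := by linarith
  have := mul_le_mul_of_nonneg_left hlow (show 0 ≤ (1 - s) * (1 / 2) by positivity)
  rw [← mul_assoc (1 - s)]
  refine le_trans (le_of_eq ?_) this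
  have e' : ρ ^ (2 - 2 * s) / (2 - 2 * s) = ρ ^ (2 - 2 * s) / (2 * (1 - s)) := by
    congr 1; ring
  rw [e']
  generalize ρ ^ (2 - 2 * s) = X
  field_simp
  ring

theorem stmt10 (n : ℕ) (hn : 1 ≤ n) (u : EuclideanSpace ℝ (Fin n) → ℝ)
    (hconv : ConvexOn ℝ Set.univ u) (hC2 : ContDiff ℝ 2 u)
    (L : ℝ) (hLip : ∀ a b : EuclideanSpace ℝ (Fin n), |u a - u b| ≤ L * ‖a - b‖)
    (x : EuclideanSpace ℝ (Fin n)) :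
    Tendsto (fun s : ℝ => (1 - s) *
        sInf {z : ℝ | ∃ A : Matrix (Fin n) (Fin n) ℝ, A.PosDef ∧ A.det = 1 ∧ z = LA s A u x})
      (nhdsWithin 1 (Set.Ioo (1 / 2 : ℝ) 1))
      (nhds (surfOmega n / 4 * (hess u x).det ^ ((1 : ℝ) / n))) := by
  have hn0 : (0:ℝ) < n := by positivity
  have hom := aux_omega_pos n hn
  have hpsd := hess_psd hconv hC2 x
  have hbdd : ∀ s : ℝ, BddBelow {z : ℝ | ∃ A : Matrix (Fin n) (Fin n) ℝ, A.PosDef ∧ A.det = 1 ∧ z = LA s A u x} :=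
    fun s => ⟨0, by rintro z ⟨A, -, -, rfl⟩; exact LA_nonneg hconv s x A⟩
  have hne : ∀ s : ℝ, {z : ℝ | ∃ A : Matrix (Fin n) (Fin n) ℝ, A.PosDef ∧ A.det = 1 ∧ z = LA s A u x}.Nonempty :=
    fun s => ⟨_, 1, Matrix.PosDef.one, by simp, rfl⟩
  have hmem : ∀ᶠ s in nhdsWithin (1:ℝ) (Set.Ioo (1 / 2 : ℝ) 1), s ∈ Set.Ioo (1/2:ℝ) 1 :=
    eventually_mem_nhdsWithin
  have hid : Tendsto (fun s : ℝ => s) (nhdsWithin (1:ℝ) (Set.Ioo (1 / 2 : ℝ) 1)) (nhds 1) :=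
    tendsto_id.mono_left nhdsWithin_le_nhds
  have hpow : ∀ r : ℝ, r > 0 → Tendsto (fun s : ℝ => r ^ (2 - 2 * s))
      (nhdsWithin (1:ℝ) (Set.Ioo (1 / 2 : ℝ) 1)) (nhds 1) := by
    intro r hr
    have h1 : ContinuousAt (fun s : ℝ => r ^ (2 - 2 * s)) 1 := by
      refine ContinuousAt.rpow (by fun_prop) (by fun_prop) (Or.inl hr.ne')
    have := h1.tendsto.mono_left (nhdsWithin_le_nhds (s := Set.Ioo (1 / 2 : ℝ) 1))
    simpa using this
  rw [tendsto_order]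
  constructor
  · intro a ha
    by_cases hd : (hess u x).det = 0
    · rw [hd, Real.zero_rpow (by positivity), mul_zero] at ha
      filter_upwards [hmem] with s hs
      refine ha.trans_le (mul_nonneg (by linarith [hs.2]) ?_)
      exact Real.sInf_nonneg (by rintro z ⟨A, -, -, rfl⟩; exact LA_nonneg hconv s x A)
    have hH : (hess u x).PosDef := hpsd.posDef_iff_det_ne_zero.2 hd
    have hdp := hH.det_pos
    obtain ⟨η, hη, hη1, hηa⟩ : ∃ η : ℝ, 0 < η ∧ η < 1 ∧
        a < (1 - η) * (surfOmega n / 4 * 1 * (hess u x).det ^ ((1:ℝ) / n)) := by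
      have hc : Tendsto (fun η : ℝ => (1 - η) * (surfOmega n / 4 * 1 * (hess u x).det ^ ((1:ℝ) / n)))
          (nhdsWithin 0 (Set.Ioi 0)) (nhds (surfOmega n / 4 * (hess u x).det ^ ((1:ℝ) / n))) := by
        have h1 : Continuous (fun η : ℝ => (1 - η) * (surfOmega n / 4 * 1 * (hess u x).det ^ ((1:ℝ) / n))) := by
          fun_prop
        have := (h1.tendsto 0).mono_left (nhdsWithin_le_nhds (s := Set.Ioi 0))
        simpa using this
      have e1 := hc.eventually (lt_mem_nhds ha)
      have e2 : ∀ᶠ η in nhdsWithin (0:ℝ) (Set.Ioi 0), η ∈ Set.Ioo (0:ℝ) 1 :=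
        Ioo_mem_nhdsGT one_pos
      obtain ⟨η, h1, h2⟩ := (e1.and e2).exists
      exact ⟨η, h2.1, h2.2, h1⟩
    obtain ⟨ρ, hρ, hlow⟩ := LA_lower hn hconv hC2 hLip x hH hη hη1
    have hdt : Tendsto (fun s : ℝ => (hess u x).det ^ (s / n))
        (nhdsWithin (1:ℝ) (Set.Ioo (1 / 2 : ℝ) 1)) (nhds ((hess u x).det ^ ((1:ℝ) / n))) := by
      have h1 : ContinuousAt (fun s : ℝ => (hess u x).det ^ (s / n)) 1 := by
        refine ContinuousAt.rpow (by fun_prop) (by fun_prop) (Or.inl hdp.ne')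
      exact h1.tendsto.mono_left nhdsWithin_le_nhds
    have hlim := (((hpow ρ hρ).const_mul (surfOmega n / 4)).mul hdt).const_mul (1 - η)
    filter_upwards [hmem, hlim.eventually (lt_mem_nhds hηa)] with s hs hsa
    refine hsa.trans_le ?_
    have h1s : 0 < 1 - s := by linarith [hs.2]
    rw [← div_le_iff₀' h1s]
    refine le_csInf (hne s) ?_
    rintro z ⟨A, hAp, hA, rfl⟩
    rw [div_le_iff₀' h1s]
    exact hlow s hs.1 hs.2 A hAp hA
  · intro a ha
    obtain ⟨ε, hε, hεa⟩ : ∃ ε : ℝ, 0 < ε ∧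
        surfOmega n / 4 * ((hess u x + ε • (1 : Matrix (Fin n) (Fin n) ℝ)).det ^ ((1:ℝ) / n)) < a := by
      have hc : Tendsto (fun ε : ℝ => surfOmega n / 4 *
          ((hess u x + ε • (1 : Matrix (Fin n) (Fin n) ℝ)).det ^ ((1:ℝ) / n)))
          (nhdsWithin 0 (Set.Ioi 0)) (nhds (surfOmega n / 4 * (hess u x).det ^ ((1:ℝ) / n))) := by
        have h0 : Continuous (fun ε : ℝ => (hess u x + ε • (1 : Matrix (Fin n) (Fin n) ℝ)).det) :=
          Continuous.matrix_det (by fun_prop)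
        have h1 : Continuous (fun ε : ℝ => surfOmega n / 4 *
          ((hess u x + ε • (1 : Matrix (Fin n) (Fin n) ℝ)).det ^ ((1:ℝ) / n))) :=
          continuous_const.mul (h0.rpow_const fun _ => Or.inr (by positivity))
        have := (h1.tendsto 0).mono_left (nhdsWithin_le_nhds (s := Set.Ioi 0))
        simpa using this
      obtain ⟨ε, h1, h2⟩ := ((hc.eventually (gt_mem_nhds ha)).and
        (eventually_mem_nhdsWithin (a := (0:ℝ)) (s := Set.Ioi 0))).exists
      exact ⟨ε, h2, h1⟩
    obtain ⟨A, hAp, hA, r, hr, b, hup⟩ := LA_upper hn hconv hC2 hLip x hε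
    have hlim1 := (hpow r hr).const_mul
      (surfOmega n / 4 * ((hess u x + ε • (1 : Matrix (Fin n) (Fin n) ℝ)).det ^ ((1:ℝ) / n)))
    have hlim2 : Tendsto (fun s : ℝ => (1 - s) * (surfOmega n / 2 * b * (r ^ (1 - 2 * s) / (2 * s - 1))))
        (nhdsWithin (1:ℝ) (Set.Ioo (1 / 2 : ℝ) 1)) (nhds 0) := by
      have h1 : ContinuousAt (fun s : ℝ => (1 - s) * (surfOmega n / 2 * b * (r ^ (1 - 2 * s) / (2 * s - 1)))) 1 := by
        have hr1 : ContinuousAt (fun s : ℝ => r ^ (1 - 2 * s)) 1 :=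
          ContinuousAt.rpow (by fun_prop) (by fun_prop) (Or.inl hr.ne')
        have hr2 : ContinuousAt (fun s : ℝ => r ^ (1 - 2 * s) / (2 * s - 1)) 1 :=
          hr1.div (by fun_prop) (by norm_num)
        exact ContinuousAt.mul (by fun_prop) (ContinuousAt.mul (by fun_prop) hr2)
      have := h1.tendsto.mono_left (nhdsWithin_le_nhds (s := Set.Ioo (1 / 2 : ℝ) 1))
      simpa using this
    have hlim := hlim1.add hlim2
    rw [mul_one, add_zero] at hlim
    filter_upwards [hmem, hlim.eventually (gt_mem_nhds hεa)] with s hs hsa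
    refine lt_of_le_of_lt ?_ hsa
    refine le_trans ?_ (hup s hs.1 hs.2)
    exact mul_le_mul_of_nonneg_left (csInf_le (hbdd s) ⟨A, hAp, hA, rfl⟩) (by linarith [hs.2])
end

section
/- Let k ≥ 1, 0 < s < 1, and ε₁, …, ε_k > 0. Then ∫_{S^{k−1}} (∑_{j=1}^k εⱼ² xⱼ²)^{−(k+2s)/2} dσ(x) ≥ (ω_k/k)·(∑_{i=1}^k ε_i^{−2s})/(∏_{j=1}^k εⱼ). -/
open MeasureTheory

open Set in
/-- Polar coordinates for a zero-homogeneous function cut off by a one-homogeneous gauge. -/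
theorem aux_polar {E : Type*} [NormedAddCommGroup E] [NormedSpace ℝ E] [MeasurableSpace E]
    [BorelSpace E] [FiniteDimensional ℝ E] [Nontrivial E] (μ : Measure E) [μ.IsAddHaarMeasure]
    (G : E → ENNReal) (hG : Measurable G) (hGh : ∀ r : ℝ, 0 < r → ∀ x, G (r • x) = G x)
    (h : E → ℝ) (hh : Measurable h) (hhh : ∀ r : ℝ, 0 < r → ∀ x, h (r • x) = r * h x)
    (hpos : ∀ x, x ≠ 0 → 0 < h x) :
    ∫⁻ x, {x | h x < 1}.indicator G x ∂μ =
      (∫⁻ θ : Metric.sphere (0 : E) 1,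
        G θ * ENNReal.ofReal ((h θ ^ (Module.finrank ℝ E))⁻¹) ∂μ.toSphere) *
        ENNReal.ofReal ((Module.finrank ℝ E : ℝ)⁻¹) := by
  have hm : Measurable ({x | h x < 1}.indicator G) :=
    hG.indicator (measurableSet_lt hh measurable_const)
  have hfin : 0 < Module.finrank ℝ E := Module.finrank_pos
  have hcont : Measurable fun p : Metric.sphere (0 : E) 1 × Ioi (0 : ℝ) => (p.2 : ℝ) • (p.1 : E) := by
    fun_prop
  calc
    _ = ∫⁻ x : ({(0)}ᶜ : Set E), {x | h x < 1}.indicator G x.1 ∂(μ.comap (↑)) := by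
      rw [lintegral_subtype_comap (measurableSet_singleton _).compl,
        restrict_compl_singleton]
    _ = ∫⁻ p, {x | h x < 1}.indicator G ((p.2 : ℝ) • (p.1 : E))
          ∂μ.toSphere.prod (.volumeIoiPow (Module.finrank ℝ E - 1)) := by
      refine Eq.trans ?_ ((μ.measurePreserving_homeomorphUnitSphereProd).lintegral_comp
        (hm.comp hcont))
      refine lintegral_congr fun x => ?_
      have hx : ‖(x : E)‖ ≠ 0 := norm_ne_zero_iff.2 x.2
      simp [smul_smul, hx]
    _ = ∫⁻ θ : Metric.sphere (0 : E) 1, ∫⁻ r : Ioi (0 : ℝ),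
          {x | h x < 1}.indicator G ((r : ℝ) • (θ : E))
          ∂(.volumeIoiPow (Module.finrank ℝ E - 1)) ∂μ.toSphere :=
      lintegral_prod _ (hm.comp hcont).aemeasurable
    _ = ∫⁻ θ : Metric.sphere (0 : E) 1,
        (G θ * ENNReal.ofReal ((h θ ^ (Module.finrank ℝ E))⁻¹)) *
        ENNReal.ofReal ((Module.finrank ℝ E : ℝ)⁻¹) ∂μ.toSphere := by
      refine lintegral_congr fun θ => ?_
      have hθ : (θ : E) ≠ 0 := by
        have := θ.2
        intro h0
        simp [h0] at this
      have hp := hpos _ hθ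
      have e : ∀ r : Ioi (0 : ℝ), {x | h x < 1}.indicator G ((r : ℝ) • (θ : E)) =
          (Iio (⟨(h θ)⁻¹, inv_pos.2 hp⟩ : Ioi (0 : ℝ))).indicator (fun _ => G θ) r := by
        intro r
        have hr : (0 : ℝ) < r := r.2
        have : ((r : ℝ) • (θ : E) ∈ {x | h x < 1}) ↔
            r ∈ Iio (⟨(h θ)⁻¹, inv_pos.2 hp⟩ : Ioi (0 : ℝ)) := by
          simp only [mem_ofPred_eq, mem_Iio, hhh r hr, ← Subtype.coe_lt_coe]
          rw [lt_inv_comm₀ hr hp, ← one_div, lt_div_iff₀ hr, mul_comm]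
        by_cases hc : (r : ℝ) • (θ : E) ∈ {x | h x < 1}
        · rw [indicator_of_mem hc, indicator_of_mem (this.1 hc), hGh r hr]
        · rw [indicator_of_notMem hc, indicator_of_notMem (fun h' => hc (this.2 h'))]
      simp_rw [e]
      rw [lintegral_indicator_const measurableSet_Iio, Measure.volumeIoiPow_apply_Iio, mul_assoc,
        ← ENNReal.ofReal_mul (by positivity), Nat.sub_add_cancel hfin, Nat.cast_pred hfin]
      simp [div_eq_mul_inv]
    _ = _ := by
      rw [lintegral_mul_const' _ _ ENNReal.ofReal_ne_top]

/-- Change of variables on the sphere under an injective linear map. -/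
theorem aux_change {E : Type*} [NormedAddCommGroup E] [NormedSpace ℝ E] [MeasurableSpace E]
    [BorelSpace E] [FiniteDimensional ℝ E] [Nontrivial E] (μ : Measure E) [μ.IsAddHaarMeasure]
    (f : E →L[ℝ] E) (hf : ∀ x, x ≠ 0 → f x ≠ 0) (c : ENNReal) (hc : μ.map f = c • μ)
    (G : E → ENNReal) (hG : Measurable G) (hGh : ∀ r : ℝ, 0 < r → ∀ x, G (r • x) = G x) :
    ∫⁻ θ : Metric.sphere (0 : E) 1,
        G (f θ) * ENNReal.ofReal ((‖f θ‖ ^ (Module.finrank ℝ E))⁻¹) ∂μ.toSphere =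
      c * ∫⁻ θ : Metric.sphere (0 : E) 1, G θ ∂μ.toSphere := by
  have hfin : 0 < Module.finrank ℝ E := Module.finrank_pos
  have h1 := aux_polar μ (fun x => G (f x)) (hG.comp f.continuous.measurable)
    (fun r hr x => by simp [hGh r hr]) (fun x => ‖f x‖) (by fun_prop)
    (fun r hr x => by simp [norm_smul, abs_of_pos hr]) (fun x hx => norm_pos_iff.2 (hf x hx))
  have h2 := aux_polar μ G hG hGh (fun x => ‖x‖) (by fun_prop)
    (fun r hr x => by simp [norm_smul, abs_of_pos hr]) (fun x hx => norm_pos_iff.2 hx)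
  have h3 : ∫⁻ x, {x | ‖f x‖ < 1}.indicator (fun x => G (f x)) x ∂μ =
      c * ∫⁻ x, {x | ‖x‖ < 1}.indicator G x ∂μ := by
    have hm : Measurable ({x : E | ‖x‖ < 1}.indicator G) :=
      hG.indicator (measurableSet_lt (by fun_prop) measurable_const)
    rw [← smul_eq_mul, ← lintegral_smul_measure, ← hc,
      lintegral_map hm f.continuous.measurable]
    rfl
  rw [h1, h2, ← mul_assoc] at h3
  have hk0 : ENNReal.ofReal ((Module.finrank ℝ E : ℝ)⁻¹) ≠ 0 := by
    simp [hfin]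
  have h4 := (ENNReal.mul_left_inj hk0 ENNReal.ofReal_ne_top).1 h3
  rw [h4]
  congr 1
  refine lintegral_congr fun θ => ?_
  simp

theorem aux_moment (k : ℕ) [Nonempty (Fin k)] (i j : Fin k) :
    ∫ θ : Metric.sphere (0 : EuclideanSpace ℝ (Fin k)) 1, (θ : EuclideanSpace ℝ (Fin k)) i ^ 2
      ∂(volume : Measure (EuclideanSpace ℝ (Fin k))).toSphere =
    ∫ θ : Metric.sphere (0 : EuclideanSpace ℝ (Fin k)) 1, (θ : EuclideanSpace ℝ (Fin k)) j ^ 2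
      ∂(volume : Measure (EuclideanSpace ℝ (Fin k))).toSphere := by
  let L := LinearIsometryEquiv.piLpCongrLeft 2 ℝ ℝ (Equiv.swap i j)
  have h := aux_change (volume : Measure (EuclideanSpace ℝ (Fin k)))
    (L.toContinuousLinearEquiv : EuclideanSpace ℝ (Fin k) →L[ℝ] EuclideanSpace ℝ (Fin k))
    (by intro x hx; simpa using hx) 1
    (by
      rw [one_smul]
      exact L.measurePreserving.map_eq)
    (fun x => ENNReal.ofReal ((x i / ‖x‖) ^ 2)) (by fun_prop)
    (by
      intro r hr x
      simp only [norm_smul, PiLp.smul_apply, smul_eq_mul, Real.norm_eq_abs, abs_of_pos hr]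
      rw [mul_div_mul_left _ _ hr.ne'])
  rw [integral_eq_lintegral_of_nonneg_ae (.of_forall fun _ => sq_nonneg _) (by fun_prop),
    integral_eq_lintegral_of_nonneg_ae (.of_forall fun _ => sq_nonneg _) (by fun_prop)]
  congr 1
  simp [L] at h
  rw [← h]

theorem aux_moment_eq (k : ℕ) (hk : 1 ≤ k) (i : Fin k) :
    ∫ θ : Metric.sphere (0 : EuclideanSpace ℝ (Fin k)) 1, (θ : EuclideanSpace ℝ (Fin k)) i ^ 2
      ∂(volume : Measure (EuclideanSpace ℝ (Fin k))).toSphere = surfOmega k / k := by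
  have : Nonempty (Fin k) := ⟨i⟩
  have hk0 : (0 : ℝ) < k := by exact_mod_cast hk
  have hsum : ∑ j : Fin k, ∫ θ : Metric.sphere (0 : EuclideanSpace ℝ (Fin k)) 1,
      (θ : EuclideanSpace ℝ (Fin k)) j ^ 2
      ∂(volume : Measure (EuclideanSpace ℝ (Fin k))).toSphere = surfOmega k := by
    rw [← integral_finsetSum]
    · have : ∀ θ : Metric.sphere (0 : EuclideanSpace ℝ (Fin k)) 1,
          ∑ j, (θ : EuclideanSpace ℝ (Fin k)) j ^ 2 = 1 := by
        intro θ
        rw [← EuclideanSpace.real_norm_sq_eq]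
        simp
      simp_rw [this]
      rw [integral_const, Measure.toSphere_real_apply_univ, measureReal_def,
        EuclideanSpace.volume_ball]
      simp only [finrank_euclideanSpace, Fintype.card_fin, ENNReal.ofReal_one, one_pow, one_mul,
        smul_eq_mul, mul_one]
      have hg : 0 < Real.Gamma ((k : ℝ) / 2) := Real.Gamma_pos_of_pos (by positivity)
      rw [Real.Gamma_add_one (by positivity), ENNReal.toReal_ofReal (by positivity), surfOmega,
        Real.sqrt_eq_rpow, ← Real.rpow_natCast, ← Real.rpow_mul Real.pi_pos.le]
      rw [show (1 / 2 * (k : ℝ)) = k / 2 by ring]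
      field_simp
    · intro j _
      refine Continuous.integrable_of_hasCompactSupport (by fun_prop) ?_
      exact HasCompactSupport.of_compactSpace _
  rw [Finset.sum_congr rfl (fun j _ => aux_moment k j i)] at hsum
  simp at hsum
  rw [← hsum]
  field_simp

theorem aux_main (k : ℕ) [Nonempty (Fin k)] (s : ℝ) (hs0 : 0 < s)
    (ε : Fin k → ℝ) (hε : ∀ j, 0 < ε j) :
    ∫ x : Metric.sphere (0 : EuclideanSpace ℝ (Fin k)) 1,
        (∑ j, ε j ^ 2 * ((x : EuclideanSpace ℝ (Fin k)) j) ^ 2) ^ (-(((k : ℝ) + 2 * s) / 2))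
        ∂(volume : Measure (EuclideanSpace ℝ (Fin k))).toSphere =
    (∏ j, ε j)⁻¹ * ∫ x : Metric.sphere (0 : EuclideanSpace ℝ (Fin k)) 1,
        (∑ j, ((x : EuclideanSpace ℝ (Fin k)) j) ^ 2 * (ε j ^ 2)⁻¹) ^ s
        ∂(volume : Measure (EuclideanSpace ℝ (Fin k))).toSphere := by
  let b := (EuclideanSpace.basisFun (Fin k) ℝ).toBasis
  let f := Matrix.toLin b b (Matrix.diagonal ε)
  have hfa : ∀ x j, f x j = ε j * x j := by
    intro x j
    simp [f, b, Matrix.toLin_apply, Matrix.mulVec_diagonal, Pi.single_apply]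
  have hdet : LinearMap.det f = ∏ j, ε j := by
    simp [f, LinearMap.det_toLin]
  have hP : 0 < ∏ j, ε j := Finset.prod_pos fun j _ => hε j
  have hn : ∀ x, ‖f x‖ ^ 2 = ∑ j, ε j ^ 2 * x j ^ 2 := by
    intro x
    rw [EuclideanSpace.real_norm_sq_eq]
    simp [hfa, mul_pow]
  have hinj : ∀ x, x ≠ 0 → f x ≠ 0 := by
    intro x hx h0
    apply hx
    ext j
    have := hfa x j
    rw [h0] at this
    simpa [(hε j).ne'] using this.symm
  have h := aux_change (volume : Measure (EuclideanSpace ℝ (Fin k)))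
    (LinearMap.toContinuousLinearMap f) hinj (ENNReal.ofReal (∏ j, ε j)⁻¹)
    (by
      have := Measure.map_linearMap_addHaar_eq_smul_addHaar
        (volume : Measure (EuclideanSpace ℝ (Fin k))) (f := f) (by rw [hdet]; exact hP.ne')
      rw [hdet, abs_of_pos (inv_pos.2 hP)] at this
      exact this)
    (fun x => ENNReal.ofReal (((∑ j, (x j) ^ 2 * (ε j ^ 2)⁻¹) / ‖x‖ ^ 2) ^ s)) (by fun_prop)
    (by
      intro r hr x
      simp only [norm_smul, PiLp.smul_apply, smul_eq_mul, Real.norm_eq_abs, abs_of_pos hr, mul_pow,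
        mul_assoc, ← Finset.mul_sum]
      rw [mul_div_mul_left _ _ (by positivity)])
  have hnn : ∀ x : EuclideanSpace ℝ (Fin k), 0 ≤ ∑ j, (x j) ^ 2 * (ε j ^ 2)⁻¹ :=
    fun x => Finset.sum_nonneg fun j _ => by positivity
  rw [integral_eq_lintegral_of_nonneg_ae
      (.of_forall fun x => Real.rpow_nonneg (by rw [← hn]; positivity) _)
      (by apply Measurable.aestronglyMeasurable; fun_prop),
    integral_eq_lintegral_of_nonneg_ae (.of_forall fun x => Real.rpow_nonneg (hnn _) _)
      (by apply Measurable.aestronglyMeasurable; fun_prop)]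
  rw [← ENNReal.toReal_ofReal (inv_pos.2 hP).le, ← ENNReal.toReal_mul]
  congr 1
  have e2 : ∀ x : Metric.sphere (0 : EuclideanSpace ℝ (Fin k)) 1,
      ‖(x : EuclideanSpace ℝ (Fin k))‖ = 1 := fun x => by simp
  simp only [e2, one_pow, div_one] at h
  rw [← h]
  refine lintegral_congr fun x => ?_
  have hx0 : (x : EuclideanSpace ℝ (Fin k)) ≠ 0 := by
    intro h0
    have := e2 x
    simp [h0] at this
  have hp : 0 < ‖f x‖ := norm_pos_iff.2 (hinj _ hx0)
  have e3 : ∑ j, (f x j) ^ 2 * (ε j ^ 2)⁻¹ = 1 := by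
    have := e2 x
    have h5 := EuclideanSpace.real_norm_sq_eq (x : EuclideanSpace ℝ (Fin k))
    rw [this, one_pow] at h5
    refine Eq.trans ?_ h5.symm
    refine Finset.sum_congr rfl fun j _ => ?_
    rw [hfa]
    have := (hε j).ne'
    field_simp
  simp only [LinearMap.coe_toContinuousLinearMap']
  rw [e3, ← hn, finrank_euclideanSpace, Fintype.card_fin, ← ENNReal.ofReal_mul (by positivity)]
  congr 1
  rw [one_div, Real.inv_rpow (by positivity), ← mul_inv, Real.rpow_neg (by positivity)]
  congr 1
  rw [← Real.rpow_natCast, ← Real.rpow_natCast, ← Real.rpow_mul hp.le, ← Real.rpow_mul hp.le,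
    ← Real.rpow_add hp]
  congr 1
  push_cast
  ring

theorem stmt11 (k : ℕ) (hk : 1 ≤ k) (s : ℝ) (hs0 : 0 < s) (hs1 : s < 1)
    (ε : Fin k → ℝ) (hε : ∀ j, 0 < ε j) :
    surfOmega k / k * ((∑ i, ε i ^ (-(2 * s))) / ∏ j, ε j) ≤
      ∫ x : Metric.sphere (0 : EuclideanSpace ℝ (Fin k)) 1,
        (∑ j, ε j ^ 2 * ((x : EuclideanSpace ℝ (Fin k)) j) ^ 2) ^ (-(((k : ℝ) + 2 * s) / 2))
        ∂(volume : Measure (EuclideanSpace ℝ (Fin k))).toSphere := by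
  have : Nonempty (Fin k) := ⟨⟨0, hk⟩⟩
  have hP : 0 < ∏ j, ε j := Finset.prod_pos fun j _ => hε j
  have hint : ∀ g : Metric.sphere (0 : EuclideanSpace ℝ (Fin k)) 1 → ℝ, Continuous g →
      Integrable g (volume : Measure (EuclideanSpace ℝ (Fin k))).toSphere := fun g hg =>
    hg.integrable_of_hasCompactSupport (HasCompactSupport.of_compactSpace _)
  rw [aux_main k s hs0 ε hε, ← mul_div_assoc, div_eq_inv_mul]
  refine mul_le_mul_of_nonneg_left ?_ (inv_pos.2 hP).le
  calc surfOmega k / k * ∑ i, ε i ^ (-(2 * s))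
      = ∫ x : Metric.sphere (0 : EuclideanSpace ℝ (Fin k)) 1,
        ∑ j, (x : EuclideanSpace ℝ (Fin k)) j ^ 2 * ε j ^ (-(2 * s))
        ∂(volume : Measure (EuclideanSpace ℝ (Fin k))).toSphere := by
        rw [integral_finsetSum _ (fun j _ => hint _ (by fun_prop)), Finset.mul_sum]
        refine Finset.sum_congr rfl fun j _ => ?_
        rw [integral_mul_const, aux_moment_eq k hk j]
    _ ≤ _ := by
        refine integral_mono (hint _ (by fun_prop)) (hint _ ?_) fun x => ?_
        · refine Continuous.rpow_const (by fun_prop) fun x => Or.inr hs0.le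
        · have hx : ∑ j, (x : EuclideanSpace ℝ (Fin k)) j ^ 2 = 1 := by
            rw [← EuclideanSpace.real_norm_sq_eq]
            simp
          have := (Real.concaveOn_rpow hs0.le hs1.le).le_map_sum (t := Finset.univ)
            (w := fun j => (x : EuclideanSpace ℝ (Fin k)) j ^ 2) (p := fun j => (ε j ^ 2)⁻¹)
            (fun j _ => sq_nonneg _) hx (fun j _ => by simp; positivity)
          simp only [smul_eq_mul] at this
          refine le_trans (le_of_eq ?_) this
          refine Finset.sum_congr rfl fun j _ => ?_
          congr 1
          rw [Real.inv_rpow (by positivity), Real.rpow_neg (hε j).le, ← Real.rpow_natCast,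
            ← Real.rpow_mul (hε j).le]
          norm_num
end

section
/- Let k ≥ 1, 0 < s < 1, and ε₁, …, ε_k > 0. Then ∫_{S^{k−1}} (∑_{j=1}^k εⱼ² xⱼ²)^{−(k+2s)/2} dσ(x) ≤ (π^{k/2}/(s·Γ(2−s)·Γ(k/2 + s)))·(∑_{i=1}^k ε_i^{−2s})/(∏_{j=1}^k εⱼ). -/
open MeasureTheory

lemma gam_aux (s : ℝ) (hs0 : 0 < s) (hs1 : s < 1) :
    2 * (s * Real.Gamma (2 - s) * Real.Gamma (s + 1/2)) ≤ Real.sqrt Real.pi := by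
  have h1 : Real.Gamma (2 - s) ≤ 1 := by
    have := Real.convexOn_Gamma.2 (show (1:ℝ) ∈ Set.Ioi 0 by simp)
      (show (2:ℝ) ∈ Set.Ioi 0 by simp) hs0.le (show 0 ≤ 1 - s by linarith) (by ring)
    simp only [smul_eq_mul, Real.Gamma_one, Real.Gamma_two] at this
    rw [show s * 1 + (1 - s) * 2 = 2 - s by ring] at this
    linarith
  have h2 : Real.Gamma (s + 1/2) ≤ Real.sqrt Real.pi * (1 - s / 2) := by
    have := Real.convexOn_Gamma.2 (show (1/2:ℝ) ∈ Set.Ioi 0 by simp)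
      (show (1/2+1:ℝ) ∈ Set.Ioi 0 by norm_num) (show 0 ≤ 1 - s by linarith) hs0.le (by ring)
    rw [Real.Gamma_add_one (by norm_num), Real.Gamma_one_half_eq] at this
    simp only [smul_eq_mul] at this
    rw [show (1 - s) * (1/2) + s * (1/2 + 1) = s + 1/2 by ring] at this
    linarith
  have h3 : 0 < Real.Gamma (2 - s) := Real.Gamma_pos_of_pos (by linarith)
  have h4 : 0 < Real.Gamma (s + 1/2) := Real.Gamma_pos_of_pos (by linarith)
  have h5 : s * Real.Gamma (2 - s) * Real.Gamma (s + 1/2)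
      ≤ s * 1 * (Real.sqrt Real.pi * (1 - s / 2)) := by gcongr
  nlinarith [mul_nonneg (Real.sqrt_nonneg Real.pi) (sq_nonneg (1 - s))]

lemma int1 (e s : ℝ) (he : 0 < e) (hs0 : 0 < s) :
    ∫ t : ℝ, (t^2)^s * Real.exp (-(e^2) * t^2) = e ^ (-(2*s)) * e⁻¹ * Real.Gamma (s + 1/2) := by
  have h := integral_comp_abs (f := fun t => (t^2)^s * Real.exp (-(e^2) * t^2))
  simp only [sq_abs] at h
  rw [h]
  have h2 := integral_rpow_mul_exp_neg_mul_rpow (p := 2) (q := 2 * s) (b := e^2) (by norm_num)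
    (by linarith) (by positivity)
  have h3 : ∫ t in Set.Ioi (0:ℝ), (t^2)^s * Real.exp (-(e^2) * t^2) =
     ∫ x in Set.Ioi (0:ℝ), x ^ (2*s) * Real.exp (-(e^2) * x ^ (2:ℝ)) := by
    refine setIntegral_congr_fun measurableSet_Ioi (fun t ht => ?_)
    simp only [Set.mem_Ioi] at ht
    rw [Real.rpow_mul ht.le, Real.rpow_two]
  rw [h3, h2, ← Real.rpow_natCast e 2, ← Real.rpow_mul he.le, ← Real.rpow_neg_one e,
    ← Real.rpow_add he]
  rw [show ((2:ℕ):ℝ) * (-(2 * s + 1) / 2) = -(2*s) + -1 by push_cast; ring,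
    show (2 * s + 1)/2 = s + 1/2 by ring]
  ring

lemma int1_integrable (e s : ℝ) (he : 0 < e) (hs0 : 0 < s) :
    Integrable (fun t : ℝ => (t^2)^s * Real.exp (-(e^2) * t^2)) := by
  by_contra hc
  have h := int1 e s he hs0
  rw [integral_undef hc] at h
  have : 0 < Real.Gamma (s + 1/2) := Real.Gamma_pos_of_pos (by linarith)
  have : 0 < e ^ (-(2*s)) * e⁻¹ * Real.Gamma (s + 1/2) := by positivity
  linarith

lemma int0 (e : ℝ) (he : 0 < e) :
    ∫ t : ℝ, Real.exp (-(e^2) * t^2) = e⁻¹ * Real.sqrt Real.pi := by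
  rw [integral_gaussian, Real.sqrt_div Real.pi_pos.le, Real.sqrt_sq he.le]
  ring

lemma sum_rpow (k : ℕ) (s : ℝ) (hs0 : 0 < s) (hs1 : s < 1) (a : Fin k → ℝ) (ha : ∀ i, 0 ≤ a i) :
    (∑ i, a i) ^ s ≤ ∑ i, a i ^ s := by
  have : ∀ S : Finset (Fin k), (∑ i ∈ S, a i) ^ s ≤ ∑ i ∈ S, a i ^ s := by
    intro S
    induction S using Finset.induction_on with
    | empty => simp [Real.zero_rpow hs0.ne']
    | insert i S hi ih =>
      rw [Finset.sum_insert hi, Finset.sum_insert hi]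
      refine (Real.rpow_add_le_add_rpow (ha i) (Finset.sum_nonneg fun j _ => ha j) hs0.le
        hs1.le).trans ?_
      linarith
  exact this _

lemma term_aux (k : ℕ) (s : ℝ) (hs0 : 0 < s) (ε : Fin k → ℝ) (hε : ∀ j, 0 < ε j) (i : Fin k) :
    ∫⁻ x : Fin k → ℝ, ENNReal.ofReal ((x i ^ 2) ^ s * Real.exp (-∑ j, ε j ^ 2 * x j ^ 2)) =
    ENNReal.ofReal (ε i ^ (-(2 * s)) * (∏ j, ε j)⁻¹ * (Real.sqrt Real.pi ^ (k-1) *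
      Real.Gamma (s + 1/2))) := by
  let F : Fin k → ℝ → ℝ := fun j t =>
    (if j = i then (t^2)^s else 1) * Real.exp (-(ε j ^2) * t^2)
  have hF : ∀ x : Fin k → ℝ, (x i ^ 2) ^ s * Real.exp (-∑ j, ε j ^ 2 * x j ^ 2) =
      ∏ j, F j (x j) := by
    intro x
    simp only [F, Finset.prod_mul_distrib, ← Real.exp_sum]
    simp
  have hint : ∀ j, Integrable (F j) := by
    intro j
    by_cases h : j = i
    · simpa [F, h] using int1_integrable (ε i) s (hε i) hs0
    · simpa [F, h] using integrable_exp_neg_mul_sq (b := ε j ^ 2) (by have := hε j; positivity)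
  simp_rw [hF]
  have hI : Integrable (fun x : Fin k → ℝ => ∏ j, F j (x j)) := Integrable.fintype_prod hint
  rw [← ofReal_integral_eq_lintegral_ofReal hI
    (Filter.Eventually.of_forall fun x => Finset.prod_nonneg fun j _ => by
      simp only [F]; split_ifs <;> positivity)]
  congr 1
  have := integral_fintype_prod_volume_eq_prod F
  rw [this]
  have hv : ∀ j, ∫ t, F j t = (ε j)⁻¹ * (if j = i then ε i ^ (-(2*s)) * Real.Gamma (s + 1/2)
      else Real.sqrt Real.pi) := by
    intro j
    by_cases h : j = i
    · subst h
      simp only [F, if_true]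
      rw [int1 _ _ (hε j) hs0]; ring
    · simp only [F, h, if_false, one_mul]
      rw [int0 _ (hε j)]
  simp_rw [hv]
  have hp : ∏ j, (if j = i then ε i ^ (-(2*s)) * Real.Gamma (s + 1/2) else Real.sqrt Real.pi) =
      ε i ^ (-(2*s)) * Real.Gamma (s + 1/2) * Real.sqrt Real.pi ^ (k-1) := by
    rw [← Finset.mul_prod_erase Finset.univ _ (Finset.mem_univ i)]
    rw [Finset.prod_congr (g := fun _ => Real.sqrt Real.pi) rfl
      (by intro j hj; simp [Finset.ne_of_mem_erase hj])]
    simp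
  rw [Finset.prod_mul_distrib, Finset.prod_inv_distrib, hp]
  ring

lemma upper (k : ℕ) (s : ℝ) (hs0 : 0 < s) (hs1 : s < 1) (ε : Fin k → ℝ) (hε : ∀ j, 0 < ε j) :
    ∫⁻ x : EuclideanSpace ℝ (Fin k), ENNReal.ofReal
      ((∑ i, x i ^ 2) ^ s * Real.exp (-∑ j, ε j ^ 2 * x j ^ 2)) ≤
    ENNReal.ofReal ((∑ i, ε i ^ (-(2 * s))) * (∏ j, ε j)⁻¹ * (Real.sqrt Real.pi ^ (k-1) *
      Real.Gamma (s + 1/2))) := by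
  have h := (PiLp.volume_preserving_ofLp (Fin k)).lintegral_comp_emb
    (MeasurableEquiv.toLp 2 (Fin k → ℝ)).symm.measurableEmbedding
    (fun x => ENNReal.ofReal ((∑ i, x i ^ 2) ^ s * Real.exp (-∑ j, ε j ^ 2 * x j ^ 2)))
  refine (le_of_eq h).trans ?_
  have hG : 0 < Real.Gamma (s + 1/2) := Real.Gamma_pos_of_pos (by linarith)
  have hP : 0 < ∏ j, ε j := Finset.prod_pos fun j _ => hε j
  calc _ ≤ ∫⁻ x : Fin k → ℝ, ∑ i, ENNReal.ofReal
        ((x i ^ 2) ^ s * Real.exp (-∑ j, ε j ^ 2 * x j ^ 2)) := by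
        refine lintegral_mono fun x => ?_
        rw [← ENNReal.ofReal_sum_of_nonneg (fun i _ => by positivity), ← Finset.sum_mul]
        gcongr
        exact sum_rpow k s hs0 hs1 _ fun i => sq_nonneg _
    _ = ∑ i, ENNReal.ofReal (ε i ^ (-(2 * s)) * (∏ j, ε j)⁻¹ * (Real.sqrt Real.pi ^ (k-1) *
      Real.Gamma (s + 1/2))) := by
        rw [lintegral_finsetSum _ (fun i _ => by fun_prop)]
        exact Finset.sum_congr rfl fun i _ => term_aux k s hs0 ε hε i
    _ = _ := by
        rw [← ENNReal.ofReal_sum_of_nonneg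
          (fun i _ => by have := Real.rpow_pos_of_pos (hε i) (-(2*s)); positivity),
          Finset.sum_mul, Finset.sum_mul]

lemma radial (k : ℕ) (hk : 1 ≤ k) (s b : ℝ) (hs0 : 0 < s) (hb : 0 < b) :
    ∫⁻ r : Set.Ioi (0:ℝ), ENNReal.ofReal (((r:ℝ)^2)^s * Real.exp (-(r.1^2 * b)))
      ∂(Measure.volumeIoiPow (k-1)) =
    ENNReal.ofReal (b ^ (-(((k : ℝ) + 2 * s) / 2)) * (Real.Gamma ((k:ℝ)/2+s) / 2)) := by
  have hk' : (1:ℝ) ≤ k := by exact_mod_cast hk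
  rw [Measure.volumeIoiPow, lintegral_withDensity_eq_lintegral_mul₀ (by fun_prop) (by fun_prop)]
  have h := lintegral_subtype_comap (μ := volume) (measurableSet_Ioi (a := (0:ℝ)))
    (fun r : ℝ => ENNReal.ofReal (r^(k-1)) * ENNReal.ofReal ((r^2)^s * Real.exp (-(r^2 * b))))
  refine Eq.trans h ?_
  have h2 := integral_rpow_mul_exp_neg_mul_rpow (p := 2) (q := k - 1 + 2 * s) (b := b) (by norm_num)
    (by linarith) hb
  have h3 := integrableOn_rpow_mul_exp_neg_mul_rpow (p := 2) (s := k - 1 + 2 * s) (b := b)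
    (by linarith) (by norm_num) hb
  rw [show b ^ (-(((k : ℝ) + 2 * s) / 2)) * (Real.Gamma ((k:ℝ)/2+s) / 2) =
    b ^ (-((k - 1 + 2 * s) + 1) / 2) * (1 / 2) * Real.Gamma (((k - 1 + 2 * s) + 1) / 2) by
      rw [show -(((k : ℝ) + 2 * s) / 2) = (-((k - 1 + 2 * s) + 1) / 2) by ring,
        show (k:ℝ)/2+s = ((k - 1 + 2 * s) + 1) / 2 by ring]
      ring, ← h2, ofReal_integral_eq_lintegral_ofReal h3]
  · refine setLIntegral_congr_fun measurableSet_Ioi fun r hr => ?_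
    simp only [Set.mem_Ioi] at hr
    rw [← ENNReal.ofReal_mul (by positivity), ← mul_assoc, Real.rpow_add hr, Real.rpow_mul hr.le,
      Real.rpow_two, ← Real.rpow_natCast r (k-1), Nat.cast_sub hk, Nat.cast_one]
    congr 3
    ring
  · filter_upwards [ae_restrict_mem measurableSet_Ioi] with r hr
    simp only [Set.mem_Ioi] at hr
    simp only [Pi.zero_apply]
    positivity

lemma Qpos (k : ℕ) (ε : Fin k → ℝ) (hε : ∀ j, 0 < ε j)
    (x : Metric.sphere (0 : EuclideanSpace ℝ (Fin k)) 1) :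
    0 < ∑ j, ε j ^ 2 * ((x : EuclideanSpace ℝ (Fin k)) j) ^ 2 := by
  have hx : (x : EuclideanSpace ℝ (Fin k)) ≠ 0 := ne_zero_of_mem_unit_sphere x
  obtain ⟨j, hj⟩ : ∃ j, (x : EuclideanSpace ℝ (Fin k)) j ≠ 0 := by
    by_contra! hc
    exact hx (by ext j; simpa using hc j)
  refine Finset.sum_pos' (fun j _ => by positivity) ⟨j, Finset.mem_univ _, ?_⟩
  have := hε j
  positivity

lemma polar (k : ℕ) (hk : 1 ≤ k) (s : ℝ) (hs0 : 0 < s) (ε : Fin k → ℝ) (hε : ∀ j, 0 < ε j) :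
    ∫⁻ x : EuclideanSpace ℝ (Fin k), ENNReal.ofReal
      ((∑ i, x i ^ 2) ^ s * Real.exp (-∑ j, ε j ^ 2 * x j ^ 2)) =
    ∫⁻ x : Metric.sphere (0 : EuclideanSpace ℝ (Fin k)) 1, ENNReal.ofReal
        ((∑ j, ε j ^ 2 * ((x : EuclideanSpace ℝ (Fin k)) j) ^ 2) ^ (-(((k : ℝ) + 2 * s) / 2))
          * (Real.Gamma ((k:ℝ)/2+s) / 2))
        ∂(volume : Measure (EuclideanSpace ℝ (Fin k))).toSphere := by
  have : Nonempty (Fin k) := ⟨⟨0, hk⟩⟩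
  set g : EuclideanSpace ℝ (Fin k) → ENNReal := fun x => ENNReal.ofReal
      ((∑ i, x i ^ 2) ^ s * Real.exp (-∑ j, ε j ^ 2 * x j ^ 2)) with hg
  have hgm : Measurable g := by fun_prop
  have h1 : ∫⁻ x, g x = ∫⁻ x : ({0}ᶜ : Set (EuclideanSpace ℝ (Fin k))), g x.1
      ∂(volume.comap Subtype.val) := by
    rw [lintegral_subtype_comap (measurableSet_singleton _).compl g, restrict_compl_singleton]
  have hmp := (volume : Measure (EuclideanSpace ℝ (Fin k))).measurePreserving_homeomorphUnitSphereProd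
  have h2 := hmp.lintegral_comp_emb (Homeomorph.measurableEmbedding _)
    (fun p => g (p.2.1 • p.1.1))
  have h3 : ∀ x : ({0}ᶜ : Set (EuclideanSpace ℝ (Fin k))),
     g ((homeomorphUnitSphereProd (EuclideanSpace ℝ (Fin k)) x).2.1 •
       (homeomorphUnitSphereProd (EuclideanSpace ℝ (Fin k)) x).1.1) = g x.1 := by
    intro x
    have := congrArg Subtype.val
      ((homeomorphUnitSphereProd (EuclideanSpace ℝ (Fin k))).symm_apply_apply x)
    rw [homeomorphUnitSphereProd_symm_apply_coe] at this
    rw [this]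
  simp_rw [h3] at h2
  rw [h1, h2, lintegral_prod _ (by fun_prop)]
  refine lintegral_congr fun x => ?_
  rw [finrank_euclideanSpace_fin, ← radial k hk s _ hs0 (Qpos k ε hε x)]
  refine lintegral_congr fun r => ?_
  have hx : ∑ i, x.1 i ^ 2 = 1 := by
    have := EuclideanSpace.norm_sq_eq x.1
    simpa using this.symm
  simp only [hg, PiLp.smul_apply, smul_eq_mul, mul_pow, ← Finset.mul_sum, hx, mul_one]
  congr 4
  rw [Finset.mul_sum]
  exact Finset.sum_congr rfl fun j _ => by ring

theorem stmt12 (k : ℕ) (hk : 1 ≤ k) (s : ℝ) (hs0 : 0 < s) (hs1 : s < 1)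
    (ε : Fin k → ℝ) (hε : ∀ j, 0 < ε j) :
    (∫ x : Metric.sphere (0 : EuclideanSpace ℝ (Fin k)) 1,
        (∑ j, ε j ^ 2 * ((x : EuclideanSpace ℝ (Fin k)) j) ^ 2) ^ (-(((k : ℝ) + 2 * s) / 2))
        ∂(volume : Measure (EuclideanSpace ℝ (Fin k))).toSphere) ≤
      Real.pi ^ ((k : ℝ) / 2) / (s * Real.Gamma (2 - s) * Real.Gamma ((k : ℝ) / 2 + s)) *
        ((∑ i, ε i ^ (-(2 * s))) / ∏ j, ε j) := by
  have hG : 0 < Real.Gamma ((k:ℝ)/2+s) := Real.Gamma_pos_of_pos (by positivity)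
  have hG1 : 0 < Real.Gamma (s + 1/2) := Real.Gamma_pos_of_pos (by linarith)
  have hG2 : 0 < Real.Gamma (2 - s) := Real.Gamma_pos_of_pos (by linarith)
  have hP : 0 < ∏ j, ε j := Finset.prod_pos fun j _ => hε j
  have hS : 0 ≤ ∑ i, ε i ^ (-(2 * s)) :=
    Finset.sum_nonneg fun i _ => (Real.rpow_pos_of_pos (hε i) _).le
  have key : (∫ x : Metric.sphere (0 : EuclideanSpace ℝ (Fin k)) 1,
        (∑ j, ε j ^ 2 * ((x : EuclideanSpace ℝ (Fin k)) j) ^ 2) ^ (-(((k : ℝ) + 2 * s) / 2))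
          * (Real.Gamma ((k:ℝ)/2+s) / 2)
        ∂(volume : Measure (EuclideanSpace ℝ (Fin k))).toSphere) ≤
        (∑ i, ε i ^ (-(2 * s))) * (∏ j, ε j)⁻¹ * (Real.sqrt Real.pi ^ (k-1) *
      Real.Gamma (s + 1/2)) := by
    rw [integral_eq_lintegral_of_nonneg_ae
      (Filter.Eventually.of_forall fun x => by
        have := Qpos k ε hε x
        simp only [Pi.zero_apply]
        positivity)
      (Measurable.aestronglyMeasurable (by fun_prop)), ← polar k hk s hs0 ε hε]
    exact ENNReal.toReal_le_of_le_ofReal (by positivity) (upper k s hs0 hs1 ε hε)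
  rw [integral_mul_const] at key
  have hpi : Real.pi ^ ((k : ℝ) / 2) = Real.sqrt Real.pi ^ (k-1) * Real.sqrt Real.pi := by
    rw [← pow_succ, Nat.sub_add_cancel hk, Real.sqrt_eq_rpow, ← Real.rpow_natCast,
      ← Real.rpow_mul Real.pi_pos.le]
    congr 1; ring
  set I := ∫ x : Metric.sphere (0 : EuclideanSpace ℝ (Fin k)) 1,
        (∑ j, ε j ^ 2 * ((x : EuclideanSpace ℝ (Fin k)) j) ^ 2) ^ (-(((k : ℝ) + 2 * s) / 2))
        ∂(volume : Measure (EuclideanSpace ℝ (Fin k))).toSphere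
  have hga := gam_aux s hs0 hs1
  rw [hpi]
  set S := ∑ i, ε i ^ (-(2 * s))
  set P := ∏ j, ε j
  set A := Real.sqrt Real.pi ^ (k-1)
  have hA : 0 ≤ A := by positivity
  rw [div_mul_div_comm, le_div_iff₀ (by positivity)]
  have e1 : I * (Real.Gamma ((k:ℝ)/2+s) / 2) * (2 * P * (s * Real.Gamma (2 - s))) ≤
    (S * P⁻¹ * (A * Real.Gamma (s + 1/2))) * (2 * P * (s * Real.Gamma (2 - s))) := by gcongr
  have e2 : (S * P⁻¹ * (A * Real.Gamma (s + 1/2))) * (2 * P * (s * Real.Gamma (2 - s))) =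
    (A * S) * (2 * (s * Real.Gamma (2 - s) * Real.Gamma (s + 1/2))) := by
    field_simp
  have e3 : (A * S) * (2 * (s * Real.Gamma (2 - s) * Real.Gamma (s + 1/2))) ≤
    (A * S) * Real.sqrt Real.pi := by gcongr
  linarith
end

section
/- Let n ≥ 1, 1/2 < s < 1, and μ > 0. Let g : ℝⁿ × ℝ → ℝ satisfy g(x,t₁) − g(x,t₂) ≥ μ(t₁ − t₂) for all x ∈ ℝⁿ and all t₁ ≥ t₂. Let u, v : ℝⁿ → ℝ be continuous functions such that for every x ∈ ℝⁿ and every symmetric positive-definite n×n matrix A with det A = 1, the functions y ↦ δ(u,x,y)/|A⁻¹y|^{n+2s} and y ↦ δ(v,x,y)/|A⁻¹y|^{n+2s} are Lebesgue integrable on ℝⁿ. Assume that for every x: (i) L_A u(x) ≥ g(x, u(x)) for every admissible A (i.e. D_s u(x) ≥ g(x,u(x))); (ii) inf_A L_A v(x) ≤ g(x, v(x)) (i.e. D_s v(x) ≤ g(x,v(x))); and (iii) (u − v)(x) → 0 as |x| → ∞. Then u(x) ≤ v(x) for all x ∈ ℝⁿ. -/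
open MeasureTheory

open Filter

theorem stmt15 (n : ℕ) (hn : 1 ≤ n) (s μ : ℝ) (hs : 1 / 2 < s) (hs1 : s < 1) (hμ : 0 < μ)
    (g : EuclideanSpace ℝ (Fin n) × ℝ → ℝ)
    (hgmono : ∀ (x : EuclideanSpace ℝ (Fin n)) (t₁ t₂ : ℝ), t₂ ≤ t₁ →
      μ * (t₁ - t₂) ≤ g (x, t₁) - g (x, t₂))
    (u v : EuclideanSpace ℝ (Fin n) → ℝ) (hu : Continuous u) (hv : Continuous v)
    (hintu : ∀ (x : EuclideanSpace ℝ (Fin n)) (A : Matrix (Fin n) (Fin n) ℝ),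
      A.PosDef → A.det = 1 → Integrable (fun y => kernelA s A u x y))
    (hintv : ∀ (x : EuclideanSpace ℝ (Fin n)) (A : Matrix (Fin n) (Fin n) ℝ),
      A.PosDef → A.det = 1 → Integrable (fun y => kernelA s A v x y))
    (hsub : ∀ (x : EuclideanSpace ℝ (Fin n)) (A : Matrix (Fin n) (Fin n) ℝ),
      A.PosDef → A.det = 1 → g (x, u x) ≤ LA s A u x)
    (hsup : ∀ x : EuclideanSpace ℝ (Fin n),
      sInf {z : ℝ | ∃ A : Matrix (Fin n) (Fin n) ℝ, A.PosDef ∧ A.det = 1 ∧ z = LA s A v x} ≤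
        g (x, v x))
    (hlim : Tendsto (fun x => u x - v x) (cocompact (EuclideanSpace ℝ (Fin n))) (nhds 0)) :
    ∀ x, u x ≤ v x := by
  intro x₁
  by_contra hx
  push Not at hx
  have hc : Continuous (fun x => u x - v x) := hu.sub hv
  obtain ⟨x₀, hmax⟩ := hc.exists_forall_ge' x₁
    ((hlim.eventually (gt_mem_nhds (sub_pos.mpr hx))).mono fun _ h => le_of_lt h)
  have hpos : 0 < u x₀ - v x₀ := lt_of_lt_of_le (sub_pos.mpr hx) (hmax x₁)
  have key : g (x₀, u x₀) ≤
      sInf {z : ℝ | ∃ A : Matrix (Fin n) (Fin n) ℝ, A.PosDef ∧ A.det = 1 ∧ z = LA s A v x₀} := by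
    refine le_csInf ⟨_, 1, Matrix.PosDef.one, Matrix.det_one, rfl⟩ ?_
    rintro z ⟨A, hA, hdet, rfl⟩
    refine (hsub x₀ A hA hdet).trans ?_
    unfold LA
    refine mul_le_mul_of_nonneg_left ?_ (by norm_num)
    refine integral_mono (hintu x₀ A hA hdet) (hintv x₀ A hA hdet) fun y => ?_
    simp only [kernelA]
    refine div_le_div_of_nonneg_right ?_ (Real.rpow_nonneg (norm_nonneg _) _)
    unfold delta2
    have h1 := hmax (x₀ + y)
    have h2 := hmax (x₀ - y)
    linarith
  have h1 := hgmono x₀ (u x₀) (v x₀) (by linarith)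
  have h2 := mul_pos hμ hpos
  have h3 := hsup x₀
  linarith
end
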